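/- Let −1 < a < 0 and r ≥ 2, with conjugate exponent r' = r/(r−1). There exists a constant C(a,r) > 0 such that for every t ≠ 0 and every φ ∈ 𝒮⁺ one has ‖S_a(t)φ · k₁^{1−2/r}‖_{L^r_a} ≤ C(a,r) (|t|^{−(a+1)(1/2 − 1/r)} + |t|^{−(1/2 − 1/r)}) ‖φ · k₁^{1−2/r'}‖_{L^{r'}_a}. -/

import Mathlib

open MeasureTheory Filter Set

noncomputable def besselJ (ν : ℂ) (z : ℝ) : ℂ :=
  ∑' k : ℕ, ((-1 : ℂ) ^ k / (Complex.Gamma (k + 1) * Complex.Gamma (ν + k + 1))) *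
    ((z : ℂ) / 2) ^ (2 * (k : ℂ) + ν)

noncomputable def DIter : ℕ → (ℝ → ℂ) → (ℝ → ℂ)
  | 0, φ => φ
  | k + 1, φ => fun x => (1 / (x : ℂ)) * deriv (DIter k φ) x

def SPlus (φ : ℝ → ℂ) : Prop :=
  ContDiffOn ℝ (⊤ : ℕ∞) φ (Ioi 0) ∧
  ∀ m k : ℕ, ∃ C : ℝ, ∀ x > (0:ℝ), ‖(x : ℂ) ^ m * DIter k φ x‖ ≤ C

noncomputable def Skernel (a x y t : ℝ) : ℂ :=
  if 0 < t then
    Complex.exp (-(Complex.I) * (((a + 1) * Real.pi / 4 : ℝ) : ℂ)) *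
      (((2 * |t|) ^ (-(a + 1) / 2) : ℝ) : ℂ) *
      (((x * y / (2 * |t|)) ^ ((1 - a) / 2) : ℝ) : ℂ) *
      besselJ (((a - 1) / 2 : ℝ) : ℂ) (x * y / (2 * |t|)) *
      Complex.exp (Complex.I * ((((x ^ 2 + y ^ 2) / (4 * |t|)) : ℝ) : ℂ))
  else
    Complex.exp ((Complex.I) * (((a + 1) * Real.pi / 4 : ℝ) : ℂ)) *
      (((2 * |t|) ^ (-(a + 1) / 2) : ℝ) : ℂ) *
      (((x * y / (2 * |t|)) ^ ((1 - a) / 2) : ℝ) : ℂ) *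
      besselJ (((a - 1) / 2 : ℝ) : ℂ) (x * y / (2 * |t|)) *
      Complex.exp (-(Complex.I) * ((((x ^ 2 + y ^ 2) / (4 * |t|)) : ℝ) : ℂ))

noncomputable def Sop (a t : ℝ) (φ : ℝ → ℂ) (x : ℝ) : ℂ :=
  ∫ y in Ioi (0:ℝ), Skernel a x y t * φ y * ((y ^ a : ℝ) : ℂ)

noncomputable def LrA (a r : ℝ) (f : ℝ → ℂ) : ℝ :=
  (∫ x in Ioi (0:ℝ), ‖f x‖ ^ r * x ^ a) ^ (1 / r)

noncomputable def k1 (a x : ℝ) : ℝ := min 1 (x ^ (a / 2))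

noncomputable def u1 (a x : ℝ) : ℝ := max (x ^ (a / 2)) (x ^ a)

/-! ### Entire power series and the Bessel function -/

lemma summable_abs_shift_mul_pow {c : ℕ → ℝ} (hc : ∀ R : ℝ, Summable fun k => |c k| * R ^ k)
    (R : ℝ) : Summable fun k : ℕ => |((k : ℝ) + 1) * c (k + 1)| * R ^ k := by
  have h := (summable_nat_add_iff 1).2 (hc (2 * (|R| + 1)))
  refine Summable.of_norm_bounded h fun k => ?_
  have hk : (k : ℝ) + 1 ≤ 2 ^ (k + 1) := by
    exact_mod_cast (Nat.lt_two_pow_self (n := k + 1)).le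
  have hR : |R| ^ k ≤ (|R| + 1) ^ (k + 1) :=
    (pow_le_pow_left₀ (abs_nonneg R) (by linarith) k).trans
      (pow_le_pow_right₀ (by linarith [abs_nonneg R]) (by lia))
  have hk0 : (0 : ℝ) ≤ (k : ℝ) + 1 := by positivity
  rw [norm_mul, norm_pow, Real.norm_eq_abs, Real.norm_eq_abs, abs_abs, abs_mul, abs_of_nonneg hk0,
    mul_pow]
  calc ((k : ℝ) + 1) * |c (k + 1)| * |R| ^ k
      = |c (k + 1)| * (((k : ℝ) + 1) * |R| ^ k) := by ring
    _ ≤ |c (k + 1)| * (2 ^ (k + 1) * (|R| + 1) ^ (k + 1)) := by gcongr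

lemma hasDerivAt_tsum_mul_pow {c : ℕ → ℝ} (hc : ∀ R : ℝ, Summable fun k => |c k| * R ^ k)
    (u : ℝ) :
    HasDerivAt (fun u : ℝ => ∑' k, c k * u ^ k) (∑' k : ℕ, ((k : ℝ) + 1) * c (k + 1) * u ^ k) u := by
  set R := |u| + 1 with hR
  have hs : Summable fun k : ℕ => |c k| * ((k : ℝ) * R ^ (k - 1)) := by
    refine (summable_nat_add_iff 1).1 ((summable_abs_shift_mul_pow hc R).congr fun k => ?_)
    have hk0 : (0 : ℝ) ≤ (k : ℝ) + 1 := by positivity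
    rw [abs_mul, abs_of_nonneg hk0]
    push_cast
    ring
  have hu : u ∈ Metric.ball (0 : ℝ) R := by simp [hR]
  have h := hasDerivAt_tsum_of_isPreconnected (g := fun k (y : ℝ) => c k * y ^ k)
    (g' := fun k (y : ℝ) => c k * ((k : ℝ) * y ^ (k - 1))) hs Metric.isOpen_ball
    (convex_ball (0 : ℝ) R).isPreconnected
    (fun k y _ => by simpa using (hasDerivAt_pow k y).const_mul (c k))
    (fun k y hy => by
      have hy' : |y| ≤ R := by simpa using (Metric.mem_ball.1 hy).le
      rw [norm_mul, norm_mul, norm_pow, Real.norm_eq_abs, Real.norm_eq_abs, Real.norm_eq_abs,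
        Nat.abs_cast]
      gcongr)
    (y₀ := u) hu (by
      refine Summable.of_norm_bounded (hc |u|) fun k => ?_
      simp [norm_mul, norm_pow]) hu
  refine h.congr_deriv ?_
  have hs' : Summable fun k : ℕ => c k * ((k : ℝ) * u ^ (k - 1)) := by
    refine Summable.of_norm_bounded hs fun k => ?_
    rw [norm_mul, norm_mul, norm_pow, Real.norm_eq_abs, Real.norm_eq_abs, Real.norm_eq_abs,
        Nat.abs_cast]
    have : |u| ≤ R := by linarith
    gcongr
  rw [hs'.tsum_eq_zero_add]
  simp only [Nat.cast_zero, zero_mul, mul_zero, zero_add, Nat.cast_add, Nat.cast_one,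
    Nat.add_sub_cancel]
  exact tsum_congr fun k => by ring

/-- Coefficients of `z ^ (-ν) * J_ν z` as a power series in `z ^ 2`. -/
noncomputable def besselCoeff (ν : ℝ) (k : ℕ) : ℝ :=
  (-1) ^ k / (Real.Gamma (k + 1) * Real.Gamma (ν + k + 1)) * (1 / 2) ^ (2 * (k : ℝ) + ν)

/-- The entire function `z ^ (-ν) * J_ν z`. -/
noncomputable def besselEntire (ν : ℝ) (z : ℝ) : ℝ := ∑' k, besselCoeff ν k * (z ^ 2) ^ k

lemma besselCoeff_succ {ν : ℝ} (hν : -1 < ν) (k : ℕ) :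
    4 * ((k : ℝ) + 1) * (ν + k + 1) * besselCoeff ν (k + 1) = -besselCoeff ν k := by
  have h1 : (0 : ℝ) < k + 1 := by positivity
  have h2 : 0 < ν + k + 1 := by have := Nat.cast_nonneg (α := ℝ) k; linarith
  have g1 := (Real.Gamma_pos_of_pos h1).ne'
  have g2 := (Real.Gamma_pos_of_pos h2).ne'
  have e1 : Real.Gamma (((k + 1 : ℕ) : ℝ) + 1) = (k + 1) * Real.Gamma (k + 1) := by
    push_cast
    exact Real.Gamma_add_one h1.ne'
  have e2 : Real.Gamma (ν + ((k + 1 : ℕ) : ℝ) + 1) = (ν + k + 1) * Real.Gamma (ν + k + 1) := by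
    rw [← Real.Gamma_add_one h2.ne']
    push_cast
    ring_nf
  have e3 : (1 / 2 : ℝ) ^ (2 * ((k + 1 : ℕ) : ℝ) + ν) = (1 / 2) ^ (2 * (k : ℝ) + ν) / 4 := by
    rw [show 2 * ((k + 1 : ℕ) : ℝ) + ν = (2 * (k : ℝ) + ν) + (2 : ℕ) by push_cast; ring,
      Real.rpow_add_natCast (by norm_num)]
    ring
  unfold besselCoeff
  rw [e1, e2, e3, pow_succ]
  have h1' := h1.ne'
  have h2' := h2.ne'
  field_simp

lemma summable_besselCoeff {ν : ℝ} (hν : -1 < ν) (R : ℝ) :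
    Summable fun k => |besselCoeff ν k| * R ^ k := by
  have hpos : ∀ k : ℕ, 0 < ν + k + 1 := fun k => by
    have := Nat.cast_nonneg (α := ℝ) k
    linarith
  refine summable_of_ratio_norm_eventually_le (r := 1 / 2) (by norm_num) ?_
  obtain ⟨N, hN⟩ := exists_nat_gt (|R| / (ν + 1))
  filter_upwards [eventually_ge_atTop N] with k hk
  have h := congrArg abs (besselCoeff_succ hν k)
  rw [abs_neg, abs_mul, abs_of_pos (by have := hpos k; positivity)] at h
  simp only [norm_mul, norm_pow, Real.norm_eq_abs, abs_abs]
  rw [← h, pow_succ]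
  have hkN : (N : ℝ) ≤ k := by exact_mod_cast hk
  have hR : |R| ≤ 1 / 2 * (4 * ((k : ℝ) + 1) * (ν + k + 1)) := by
    rw [div_lt_iff₀ (by linarith)] at hN
    have hk0 := Nat.cast_nonneg (α := ℝ) k
    nlinarith [mul_nonneg hk0 hk0]
  calc |besselCoeff ν (k + 1)| * (|R| ^ k * |R|)
      ≤ |besselCoeff ν (k + 1)| * (|R| ^ k * (1 / 2 * (4 * ((k : ℝ) + 1) * (ν + k + 1)))) := by
        gcongr
    _ = _ := by ring

lemma rpow_neg_mul_besselJ (ν : ℝ) {z : ℝ} (hz : 0 < z) :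
    ((z ^ (-ν) : ℝ) : ℂ) * besselJ (ν : ℂ) z = (besselEntire ν z : ℂ) := by
  unfold besselJ besselEntire
  rw [← tsum_mul_left, Complex.ofReal_tsum]
  refine tsum_congr fun k => ?_
  have e1 : ((z : ℂ) / 2) ^ (2 * (k : ℂ) + (ν : ℂ))
      = (((z / 2 : ℝ) ^ (2 * (k : ℝ) + ν) : ℝ) : ℂ) := by
    rw [Complex.ofReal_cpow (by positivity)]
    push_cast
    rfl
  have e2 : Complex.Gamma ((k : ℂ) + 1) = ((Real.Gamma (k + 1) : ℝ) : ℂ) := by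
    rw [← Complex.Gamma_ofReal]
    push_cast
    rfl
  have e3 : Complex.Gamma ((ν : ℂ) + k + 1) = ((Real.Gamma (ν + k + 1) : ℝ) : ℂ) := by
    rw [← Complex.Gamma_ofReal]
    push_cast
    rfl
  have e4 : (z / 2 : ℝ) ^ (2 * (k : ℝ) + ν) = (1 / 2) ^ (2 * (k : ℝ) + ν) * ((z ^ 2) ^ k * z ^ ν) := by
    rw [div_eq_mul_one_div, mul_comm, Real.mul_rpow (by norm_num) hz.le, Real.rpow_add hz,
      ← pow_mul, ← Real.rpow_natCast z (2 * k)]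
    push_cast
    rfl
  have e5 : z ^ (-ν) * z ^ ν = 1 := by rw [← Real.rpow_add hz]; simp
  rw [e1, e2, e3, e4]
  unfold besselCoeff
  norm_cast
  push_cast
  linear_combination (((-1) ^ k / (Real.Gamma (k + 1) * Real.Gamma (ν + k + 1)) *
    ((1 / 2 : ℝ) ^ (2 * (k : ℝ) + ν) * (z ^ 2) ^ k))) * e5

/-- The Bessel equation for `z ^ (-ν) * J_ν z`. -/
lemma exists_deriv_besselEntire {ν : ℝ} (hν : -1 < ν) :
    ∃ H₁ H₂ : ℝ → ℝ, (∀ z, HasDerivAt (besselEntire ν) (H₁ z) z) ∧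
      (∀ z, HasDerivAt H₁ (H₂ z) z) ∧
      ∀ z, z ≠ 0 → H₂ z = -((2 * ν + 1) / z * H₁ z + besselEntire ν z) := by
  set c := besselCoeff ν with hc
  have s0 : ∀ R : ℝ, Summable fun k => |c k| * R ^ k := summable_besselCoeff hν
  set c₁ : ℕ → ℝ := fun k => ((k : ℝ) + 1) * c (k + 1) with hc₁
  have s1 : ∀ R : ℝ, Summable fun k => |c₁ k| * R ^ k := summable_abs_shift_mul_pow s0
  set c₂ : ℕ → ℝ := fun k => ((k : ℝ) + 1) * c₁ (k + 1) with hc₂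
  have s2 : ∀ R : ℝ, Summable fun k => |c₂ k| * R ^ k := summable_abs_shift_mul_pow s1
  have sm : ∀ {d : ℕ → ℝ}, (∀ R : ℝ, Summable fun k => |d k| * R ^ k) → ∀ u : ℝ,
      Summable fun k => d k * u ^ k := fun {d} hd u =>
    Summable.of_norm_bounded (hd |u|) fun k => by simp [norm_mul, norm_pow]
  have d0 := hasDerivAt_tsum_mul_pow s0
  have d1 := hasDerivAt_tsum_mul_pow s1
  refine ⟨fun z => (∑' k, c₁ k * (z ^ 2) ^ k) * (2 * z),
    fun z => (∑' k, c₂ k * (z ^ 2) ^ k) * (2 * z) * (2 * z) + (∑' k, c₁ k * (z ^ 2) ^ k) * 2,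
    fun z => ?_, fun z => ?_, fun z hz => ?_⟩
  · have hsq : HasDerivAt (fun z : ℝ => z ^ 2) (2 * z) z := by simpa using hasDerivAt_pow 2 z
    exact (d0 (z ^ 2)).comp z hsq
  · have hsq : HasDerivAt (fun z : ℝ => z ^ 2) (2 * z) z := by simpa using hasDerivAt_pow 2 z
    have hl : HasDerivAt (fun z : ℝ => 2 * z) 2 z := by
      simpa using (hasDerivAt_id z).const_mul (2 : ℝ)
    exact ((d1 (z ^ 2)).comp z hsq).mul hl
  · have key : 4 * (∑' k, c₂ k * (z ^ 2) ^ k) * z ^ 2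
        + 4 * (ν + 1) * (∑' k, c₁ k * (z ^ 2) ^ k) + besselEntire ν z = 0 := by
      set u := z ^ 2
      have hs : Summable fun k : ℕ => (k : ℝ) * c₁ k * u ^ k := by
        refine (summable_nat_add_iff 1).1 (((sm s2 u).mul_right u).congr fun k => ?_)
        simp only [hc₂]
        push_cast
        ring
      have hshift : (∑' k, c₂ k * u ^ k) * u = ∑' k : ℕ, (k : ℝ) * c₁ k * u ^ k := by
        rw [hs.tsum_eq_zero_add, ← tsum_mul_right]
        simp only [hc₂, Nat.cast_zero, zero_mul, zero_add]
        refine tsum_congr fun k => ?_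
        push_cast
        ring
      rw [mul_assoc, hshift]
      unfold besselEntire
      rw [← tsum_mul_left, ← tsum_mul_left,
        ← (hs.mul_left 4).tsum_add ((sm s1 u).mul_left _),
        ← ((hs.mul_left 4).add ((sm s1 u).mul_left _)).tsum_add (sm s0 u)]
      rw [← tsum_zero]
      refine tsum_congr fun k => ?_
      have := besselCoeff_succ hν k
      simp only [hc₁]
      linear_combination u ^ k * this
    field_simp
    linear_combination key

lemma continuous_besselEntire {ν : ℝ} (hν : -1 < ν) : Continuous (besselEntire ν) := by
  obtain ⟨H₁, -, h, -⟩ := exists_deriv_besselEntire hν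
  exact continuous_iff_continuousAt.2 fun z => (h z).continuousAt

/-- Solutions of `D² F = (μ / z ^ 2 - 1) F` are asymptotically trigonometric. -/
lemma exists_trig_asymptotics {F F₁ : ℝ → ℝ} {μ : ℝ} (hF : ∀ z > 0, HasDerivAt F (F₁ z) z)
    (hF₁ : ∀ z > 0, HasDerivAt F₁ ((μ / z ^ 2 - 1) * F z) z) :
    ∃ A : ℂ, ∃ C : ℝ, ∀ z ≥ 1,
      |F z - (A * Complex.exp (Complex.I * z)).re| ≤ C * (1 / z) := by
  have hE : AntitoneOn (fun z => (F z ^ 2 + F₁ z ^ 2) * Real.exp (|μ| * z⁻¹)) (Ici 1) := by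
    have hd : ∀ z > 0, HasDerivAt
        (fun z => (F z ^ 2 + F₁ z ^ 2) * Real.exp (|μ| * z⁻¹))
        ((2 * F z * F₁ z + 2 * F₁ z * ((μ / z ^ 2 - 1) * F z)) * Real.exp (|μ| * z⁻¹) +
          (F z ^ 2 + F₁ z ^ 2) * (Real.exp (|μ| * z⁻¹) * (|μ| * -(z ^ 2)⁻¹))) z := by
      intro z hz
      have h1 := ((hF z hz).pow 2).add ((hF₁ z hz).pow 2)
      have h2 := ((hasDerivAt_inv hz.ne').const_mul |μ|).exp
      refine (h1.mul h2).congr_deriv ?_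
      simp
    refine antitoneOn_of_deriv_nonpos (convex_Ici 1)
      (fun z hz => (hd z (lt_of_lt_of_le one_pos hz)).continuousAt.continuousWithinAt)
      (fun z hz => (hd z ?_).differentiableAt.differentiableWithinAt) fun z hz => ?_
    · rw [interior_Ici] at hz
      exact one_pos.trans hz
    · rw [interior_Ici] at hz
      have hz0 : 0 < z := one_pos.trans hz
      rw [(hd z hz0).deriv]
      have hab : 2 * μ * (F z * F₁ z) ≤ |μ| * (F z ^ 2 + F₁ z ^ 2) := by
        calc 2 * μ * (F z * F₁ z) ≤ |μ * (2 * (F z * F₁ z))| := by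
              rw [show 2 * μ * (F z * F₁ z) = μ * (2 * (F z * F₁ z)) by ring]
              exact le_abs_self _
          _ = |μ| * |2 * (F z * F₁ z)| := abs_mul _ _
          _ ≤ |μ| * (F z ^ 2 + F₁ z ^ 2) := by
              gcongr
              exact abs_le.2 ⟨by nlinarith [sq_nonneg (F z + F₁ z)],
                by nlinarith [sq_nonneg (F z - F₁ z)]⟩
      have e : (2 * F z * F₁ z + 2 * F₁ z * ((μ / z ^ 2 - 1) * F z)) *
            Real.exp (|μ| * z⁻¹) +
          (F z ^ 2 + F₁ z ^ 2) * (Real.exp (|μ| * z⁻¹) * (|μ| * -(z ^ 2)⁻¹))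
          = (2 * μ * (F z * F₁ z) - |μ| * (F z ^ 2 + F₁ z ^ 2)) *
            ((z ^ 2)⁻¹ * Real.exp (|μ| * z⁻¹)) := by
        rw [div_eq_mul_inv]
        ring
      rw [e]
      exact mul_nonpos_of_nonpos_of_nonneg (by linarith) (by positivity)
  obtain ⟨M, hM0, hM⟩ : ∃ M : ℝ, 0 ≤ M ∧ ∀ z ≥ 1, |F z| ≤ M := by
    set E := (F 1 ^ 2 + F₁ 1 ^ 2) * Real.exp (|μ| * 1⁻¹) with hEdef
    refine ⟨√E, Real.sqrt_nonneg _, fun z hz => Real.abs_le_sqrt ?_⟩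
    have h := hE (mem_Ici.2 le_rfl) (mem_Ici.2 hz) hz
    simp only at h
    have h1 : 1 ≤ Real.exp (|μ| * z⁻¹) := by
      apply Real.one_le_exp
      have : 0 < z := by linarith
      have : 0 ≤ |μ| * z⁻¹ := by positivity
      linarith
    nlinarith [sq_nonneg (F z), sq_nonneg (F₁ z)]
  set w : ℝ → ℂ := fun z => Complex.exp (-(Complex.I * z)) * (F₁ z + Complex.I * F z) with hw
  set w' : ℝ → ℂ := fun z => Complex.exp (-(Complex.I * z)) * (μ / z ^ 2 * F z) with hw'
  have hwd : ∀ z > 0, HasDerivAt w (w' z) z := by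
    intro z hz
    have he : HasDerivAt (fun z : ℝ => Complex.exp (-(Complex.I * z)))
        (Complex.exp (-(Complex.I * z)) * (-(Complex.I * 1))) z :=
      (((Complex.ofRealCLM.hasDerivAt (x := z)).const_mul Complex.I).neg).cexp
    refine (he.mul ((hF₁ z hz).ofReal_comp.add ((hF z hz).ofReal_comp.const_mul Complex.I))).congr_deriv ?_
    simp only [hw', Pi.add_apply]
    push_cast
    linear_combination (-Complex.exp (-(Complex.I * z)) * F z) * Complex.I_sq
  have hnorm : ∀ z : ℝ, ‖Complex.exp (-(Complex.I * z))‖ = 1 := fun z => by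
    rw [Complex.norm_exp]; simp
  have hw'b : ∀ z ≥ 1, ‖w' z‖ ≤ |μ| * M * z ^ (-2 : ℝ) := by
    intro z hz
    have hz0 : 0 < z := by linarith
    have : z ^ (-2 : ℝ) = (z ^ 2)⁻¹ := by
      rw [Real.rpow_neg hz0.le]
      norm_num
    simp only [hw']
    rw [norm_mul, hnorm, one_mul, norm_mul, norm_div, norm_pow, Complex.norm_real,
      Complex.norm_real, Complex.norm_real, this, Real.norm_eq_abs, Real.norm_eq_abs,
      Real.norm_eq_abs, sq_abs, div_eq_mul_inv, mul_right_comm]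
    gcongr
    exact hM z hz
  have hwi : IntegrableOn w' (Ioi 1) := by
    have hg : IntegrableOn (fun z : ℝ => |μ| * M * z ^ (-2 : ℝ)) (Ioi 1) :=
      ((integrableOn_Ioi_rpow_of_lt (by norm_num) one_pos).const_mul _)
    refine hg.mono' ?_ ((ae_restrict_iff' measurableSet_Ioi).2 (ae_of_all _ fun z hz =>
      hw'b z (le_of_lt hz)))
    refine ContinuousOn.aestronglyMeasurable (fun z hz => ?_) measurableSet_Ioi
    have hz0 : z ≠ 0 := (one_pos.trans hz).ne'
    have hFc := (hF z (one_pos.trans hz)).continuousAt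
    refine ContinuousAt.continuousWithinAt ?_
    simp only [hw']
    have : (z : ℂ) ^ 2 ≠ 0 := by
      exact_mod_cast pow_ne_zero 2 hz0
    fun_prop (disch := assumption)
  have hlim := tendsto_limUnder_of_hasDerivAt_of_integrableOn_Ioi
    (fun z hz => hwd z (one_pos.trans hz)) hwi
  set A := limUnder atTop w
  refine ⟨-Complex.I * A, |μ| * M, fun z hz => ?_⟩
  have hz0 : 0 < z := by linarith
  have h_integral : ∫ x in Ioi z, w' x = A - w z :=
    integral_Ioi_of_hasDerivAt_of_tendsto (hwd z hz0).continuousAt.continuousWithinAt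
      (fun x hx => hwd x (hz0.trans hx)) (hwi.mono_set (Ioi_subset_Ioi hz)) hlim
  have hAw : ‖A - w z‖ ≤ |μ| * M * (1 / z) := by
    rw [← h_integral]
    have hg : IntegrableOn (fun x : ℝ => |μ| * M * x ^ (-2 : ℝ)) (Ioi z) :=
      ((integrableOn_Ioi_rpow_of_lt (by norm_num) hz0).const_mul _)
    refine (norm_integral_le_of_norm_le hg ((ae_restrict_iff' measurableSet_Ioi).2
      (ae_of_all _ fun x hx => hw'b x (hz.le.trans (le_of_lt hx))))).trans_eq ?_
    rw [integral_const_mul, integral_Ioi_rpow_of_lt (by norm_num) hz0]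
    norm_num
    left
    rw [Real.rpow_neg hz0.le, Real.rpow_one]
  have hF' : F z = (-Complex.I * w z * Complex.exp (Complex.I * z)).re := by
    have : -Complex.I * w z * Complex.exp (Complex.I * z) = F z - Complex.I * F₁ z := by
      simp only [hw]
      have e : Complex.exp (-(Complex.I * z)) * Complex.exp (Complex.I * z) = 1 := by
        rw [← Complex.exp_add]; simp
      linear_combination (-Complex.I * (F₁ z + Complex.I * F z)) * e - F z * Complex.I_sq
    rw [this]
    simp
  rw [hF', ← Complex.sub_re]
  refine (Complex.abs_re_le_norm _).trans (le_trans (le_of_eq ?_) hAw)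
  rw [← sub_mul, ← mul_sub, norm_mul, norm_mul, norm_neg, Complex.norm_I, one_mul, norm_sub_rev,
    Complex.norm_exp]
  simp

/-- Oscillatory main term and remainder of `z ^ (a / 2) * besselEntire ((a - 1) / 2) z`. -/
lemma exists_besselEntire_asymptotics {a : ℝ} (ha1 : -1 < a) (ha2 : a < 0) :
    ∃ A : ℂ, ∃ C : ℝ, 0 ≤ C ∧ ∀ z > 0,
      |z ^ (a / 2) * besselEntire ((a - 1) / 2) z - (A * Complex.exp (Complex.I * z)).re| ≤
        C * min (z ^ (a / 2)) (1 / z) := by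
  obtain ⟨H₁, H₂, h1, h2, hode⟩ := exists_deriv_besselEntire (ν := (a - 1) / 2) (by linarith)
  set H := besselEntire ((a - 1) / 2) with hH
  obtain ⟨A, C, hAC⟩ := exists_trig_asymptotics (F := fun z => z ^ (a / 2) * H z)
    (F₁ := fun z => a / 2 * z ^ (a / 2 - 1) * H z + z ^ (a / 2) * H₁ z)
    (μ := a / 2 * (a / 2 - 1))
    (fun z hz => (Real.hasDerivAt_rpow_const (Or.inl hz.ne')).mul (h1 z))
    (fun z hz => by
      refine ((((Real.hasDerivAt_rpow_const (Or.inl hz.ne')).const_mul (a / 2)).mul (h1 z)).add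
        ((Real.hasDerivAt_rpow_const (Or.inl hz.ne')).mul (h2 z))).congr_deriv ?_
      rw [hode z hz.ne', show a / 2 - 1 - 1 = a / 2 - (2 : ℕ) by push_cast; ring,
        Real.rpow_sub_natCast hz.ne', Real.rpow_sub_one hz.ne']
      field_simp
      ring)
  have hc : Continuous H := continuous_iff_continuousAt.2 fun z => (h1 z).continuousAt
  obtain ⟨D, hD⟩ := (isCompact_Icc (a := (0 : ℝ)) (b := 1)).exists_bound_of_continuousOn
    hc.continuousOn
  have hD0 : 0 ≤ D := (norm_nonneg _).trans (hD 0 (by simp))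
  refine ⟨A, |C| + D + ‖A‖, by positivity, fun z hz => ?_⟩
  rcases le_total z 1 with hz1 | hz1
  · have e1 : 1 ≤ z ^ (a / 2) := Real.one_le_rpow_of_pos_of_le_one_of_nonpos hz hz1 (by linarith)
    have e2 : z ^ (a / 2) ≤ 1 / z := by
      rw [one_div, ← Real.rpow_neg_one]
      exact Real.rpow_le_rpow_of_exponent_ge hz hz1 (by linarith)
    rw [min_eq_left e2]
    have b1 : |z ^ (a / 2) * H z| ≤ z ^ (a / 2) * D := by
      rw [abs_mul, abs_of_pos (Real.rpow_pos_of_pos hz _)]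
      gcongr
      exact hD z ⟨hz.le, hz1⟩
    have b2 : |(A * Complex.exp (Complex.I * z)).re| ≤ ‖A‖ := by
      refine (Complex.abs_re_le_norm _).trans (le_of_eq ?_)
      rw [norm_mul, Complex.norm_exp]
      simp
    have := abs_sub (z ^ (a / 2) * H z) (A * Complex.exp (Complex.I * z)).re
    nlinarith [norm_nonneg A, abs_nonneg C]
  · have e2 : 1 / z ≤ z ^ (a / 2) := by
      rw [one_div, ← Real.rpow_neg_one]
      exact Real.rpow_le_rpow_of_exponent_le hz1 (by linarith)
    rw [min_eq_right e2]
    refine (hAC z hz1).trans ?_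
    gcongr
    linarith [le_abs_self C, norm_nonneg A]

/-! ### `L²` bounds for kernels depending on the product of the variables -/

lemma lintegral_comp_mul_left (g : ℝ → ENNReal) {c : ℝ} (hc : c ≠ 0) :
    ∫⁻ x, g (c * x) = ENNReal.ofReal |c⁻¹| * ∫⁻ x, g x := by
  rw [← smul_eq_mul, ← lintegral_smul_measure, ← Real.map_volume_mul_left hc]
  exact (lintegral_map_equiv g (Homeomorph.mulLeft₀ c hc).toMeasurableEquiv).symm

lemma lintegral_Ioi_comp_mul_left (g : ℝ → ENNReal) {c : ℝ} (hc : 0 < c) :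
    ∫⁻ x in Ioi 0, g (c * x) = ENNReal.ofReal c⁻¹ * ∫⁻ x in Ioi 0, g x := by
  rw [← lintegral_indicator measurableSet_Ioi, ← lintegral_indicator measurableSet_Ioi,
    ← abs_of_pos (inv_pos.2 hc), ← lintegral_comp_mul_left _ hc.ne']
  refine lintegral_congr fun x => ?_
  simp [indicator, hc]

open scoped FourierTransform in
lemma lintegral_fourier_sq_le {f : ℝ → ℂ} (hf : Integrable f) :
    ∫⁻ w, ‖𝓕 f w‖ₑ ^ 2 ≤ ∫⁻ y, ‖f y‖ₑ ^ 2 := by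
  have hsq : ∀ g : ℝ → ℂ, ∫⁻ y, ‖g y‖ₑ ^ 2 = eLpNorm g 2 volume ^ 2 := fun g => by
    have := eLpNorm_nnreal_pow_eq_lintegral (f := g) (μ := volume) (p := 2) (by norm_num)
    simpa using this.symm
  by_cases h2 : eLpNorm f 2 volume = ⊤
  · rw [hsq f, h2]
    simp
  have hf2 : MemLp f 2 volume := ⟨hf.1, lt_top_iff_ne_top.2 h2⟩
  set g : Lp ℂ 2 (volume : Measure ℝ) := hf2.toLp f
  have hcont : Continuous (𝓕 f) :=
    VectorFourier.fourierIntegral_continuous Real.continuous_fourierChar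
      (by exact continuous_inner) hf
  have hae : ∀ᵐ x, 𝓕 f x = (𝓕 g : Lp ℂ 2 (volume : Measure ℝ)) x := by
    refine ae_eq_of_integral_contDiff_smul_eq hcont.locallyIntegrable
      ((Lp.memLp (𝓕 g)).locallyIntegrable (by norm_num)) fun u hu huc => ?_
    have hg₁ : HasCompactSupport (Complex.ofRealCLM ∘ u) := huc.comp_left rfl
    have hg₂ : ContDiff ℝ (⊤ : ℕ∞) (Complex.ofRealCLM ∘ u) := by fun_prop
    set s := hg₁.toSchwartzMap hg₂ with hs
    have h1 := congrArg (fun T => T s) (Lp.fourier_toTemperedDistribution_eq g)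
    simp only [TemperedDistribution.fourier_apply, Lp.toTemperedDistribution_apply] at h1
    have h2 := VectorFourier.integral_fourierIntegral_smul_eq_flip (L := innerₗ ℝ)
      Real.continuous_fourierChar continuous_inner (s.integrable (μ := volume)) hf
    have h3 : ∫ x, (𝓕 s) x • g x = ∫ x, (𝓕 s) x • f x :=
      integral_congr_ae (hf2.coeFn_toLp.mono fun x hx => by simp only [g, hx])
    have h4 : ∫ x, s x • 𝓕 f x = ∫ x, (𝓕 s) x • f x := by
      simpa using! h2.symm
    calc ∫ x, u x • 𝓕 f x = ∫ x, s x • 𝓕 f x := by simp [hs]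
      _ = ∫ x, s x • (𝓕 g : Lp ℂ 2 (volume : Measure ℝ)) x := by rw [h4, ← h3, h1]
      _ = _ := by simp [hs]
  rw [hsq, hsq, eLpNorm_congr_ae hae]
  have hn : ‖(𝓕 g : Lp ℂ 2 (volume : Measure ℝ))‖ₑ = ‖g‖ₑ := by
    rw [← ofReal_norm, ← ofReal_norm, Lp.norm_fourier_eq]
  rw [Lp.enorm_def, Lp.enorm_def] at hn
  rw [hn, eLpNorm_congr_ae hf2.coeFn_toLp]

lemma lintegral_exp_transform_sq_le {f : ℝ → ℂ} (hf : IntegrableOn f (Ioi 0)) {σ : ℝ}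
    (hσ : |σ| = 1) :
    ∫⁻ x in Ioi 0, ‖∫ y in Ioi 0, Complex.exp (Complex.I * ((σ * (x * y) : ℝ) : ℂ)) * f y‖ₑ ^ 2 ≤
      ENNReal.ofReal (2 * Real.pi) * ∫⁻ y in Ioi 0, ‖f y‖ₑ ^ 2 := by
  have hσ0 : σ ≠ 0 := by rintro rfl; simp at hσ
  set F : ℝ → ℂ := (Ioi 0).indicator f with hF
  have hFi : Integrable F := (integrable_indicator_iff measurableSet_Ioi).2 hf
  have hc : -(σ / (2 * Real.pi)) ≠ 0 := neg_ne_zero.2 (div_ne_zero hσ0 (by positivity))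
  have e : ∀ x : ℝ, ∫ y in Ioi 0, Complex.exp (Complex.I * ((σ * (x * y) : ℝ) : ℂ)) * f y
      = FourierTransform.fourier F (-(σ / (2 * Real.pi)) * x) := by
    intro x
    rw [Real.fourier_real_eq_integral_exp_smul, ← integral_indicator measurableSet_Ioi]
    refine integral_congr_ae (ae_of_all _ fun y => ?_)
    by_cases hy : y ∈ Ioi (0 : ℝ)
    · simp only [hF, indicator_of_mem hy, smul_eq_mul]
      congr 2
      have : (Real.pi : ℂ) ≠ 0 := by exact_mod_cast Real.pi_ne_zero
      push_cast
      field_simp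
    · simp [hF, indicator_of_notMem hy]
  calc ∫⁻ x in Ioi 0, ‖∫ y in Ioi 0, Complex.exp (Complex.I * ((σ * (x * y) : ℝ) : ℂ)) * f y‖ₑ ^ 2
      ≤ ∫⁻ x, ‖FourierTransform.fourier F (-(σ / (2 * Real.pi)) * x)‖ₑ ^ 2 := by
        simp only [e]
        exact setLIntegral_le_lintegral _ _
    _ = ENNReal.ofReal (2 * Real.pi) * ∫⁻ x, ‖FourierTransform.fourier F x‖ₑ ^ 2 := by
        rw [lintegral_comp_mul_left (fun x => ‖FourierTransform.fourier F x‖ₑ ^ 2) hc]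
        congr 2
        rw [abs_inv, abs_neg, abs_div, hσ, abs_of_pos (by positivity)]
        simp
    _ ≤ ENNReal.ofReal (2 * Real.pi) * ∫⁻ y, ‖F y‖ₑ ^ 2 := by
        exact mul_le_mul' le_rfl (lintegral_fourier_sq_le hFi)
    _ = _ := by
        rw [← lintegral_indicator measurableSet_Ioi]
        congr 2 with y
        by_cases hy : y ∈ Ioi (0 : ℝ) <;> simp [hF, hy]

/-- Schur test for kernels of the form `k (x * y)`. -/
lemma lintegral_schur_mul_sq_le {k f : ℝ → ENNReal} (hk : Measurable k)
    (hf : AEMeasurable f (volume.restrict (Ioi 0))) :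
    ∫⁻ x in Ioi 0, (∫⁻ y in Ioi 0, k (x * y) * f y) ^ 2 ≤
      (∫⁻ z in Ioi 0, k z * ENNReal.ofReal (z ^ (-(1 / 2) : ℝ))) ^ 2 *
        ∫⁻ y in Ioi 0, f y ^ 2 := by
  set w : ℝ → ENNReal := fun z => ENNReal.ofReal (z ^ (-(1 / 2) : ℝ)) with hw
  have hwm : Measurable w := by fun_prop
  set B := ∫⁻ z in Ioi 0, k z * w z with hB
  have hrow : ∀ x > 0, ∫⁻ y in Ioi 0, k (x * y) * w y = B * w x := by
    intro x hx
    have hxy : ∀ y ∈ Ioi (0 : ℝ), k (x * y) * w y =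
        ENNReal.ofReal (x ^ (1 / 2 : ℝ)) * (k (x * y) * w (x * y)) := by
      intro y hy
      have : w y = ENNReal.ofReal (x ^ (1 / 2 : ℝ)) * w (x * y) := by
        rw [hw, ← ENNReal.ofReal_mul (by positivity), Real.mul_rpow hx.le (le_of_lt hy),
          ← mul_assoc, ← Real.rpow_add hx]
        simp
      rw [this]
      ring
    rw [setLIntegral_congr_fun measurableSet_Ioi hxy,
      lintegral_const_mul _ (by fun_prop),
      lintegral_Ioi_comp_mul_left (fun z => k z * w z) hx, ← mul_assoc, mul_comm]
    congr 1
    rw [hw, ← ENNReal.ofReal_mul (by positivity), ← Real.rpow_neg_one, ← Real.rpow_add hx]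
    norm_num
  have hw0 : ∀ y ∈ Ioi (0 : ℝ), w y * (w y)⁻¹ = 1 := fun y hy =>
    ENNReal.mul_inv_cancel (by
      simpa [hw] using Real.rpow_pos_of_pos hy _) ENNReal.ofReal_ne_top
  have hcs : ∀ x > 0, (∫⁻ y in Ioi 0, k (x * y) * f y) ^ 2 ≤
      B * w x * ∫⁻ y in Ioi 0, k (x * y) * (f y ^ 2 * (w y)⁻¹) := by
    intro x hx
    have h := ENNReal.lintegral_mul_le_Lp_mul_Lq (volume.restrict (Ioi (0 : ℝ)))
      Real.HolderConjugate.two_two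
      (f := fun y => (k (x * y) * w y) ^ (1 / 2 : ℝ))
      (g := fun y => (k (x * y) * (f y ^ 2 * (w y)⁻¹)) ^ (1 / 2 : ℝ))
      (by fun_prop) (by fun_prop)
    have e1 : ∫⁻ y in Ioi 0, ((fun y => (k (x * y) * w y) ^ (1 / 2 : ℝ)) *
        (fun y => (k (x * y) * (f y ^ 2 * (w y)⁻¹)) ^ (1 / 2 : ℝ))) y
        = ∫⁻ y in Ioi 0, k (x * y) * f y := by
      refine setLIntegral_congr_fun measurableSet_Ioi fun y hy => ?_
      simp only [Pi.mul_apply]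
      rw [← ENNReal.mul_rpow_of_nonneg _ _ (by norm_num),
        show k (x * y) * w y * (k (x * y) * (f y ^ 2 * (w y)⁻¹))
          = (w y * (w y)⁻¹) * (k (x * y) * f y) ^ 2 by ring, hw0 y hy, one_mul,
        ← ENNReal.rpow_natCast, ← ENNReal.rpow_mul]
      norm_num
    have e2 : ∀ q : ENNReal, (q ^ (1 / 2 : ℝ)) ^ (2 : ℝ) = q := fun q => by
      rw [← ENNReal.rpow_mul]; norm_num
    rw [e1] at h
    simp only [e2] at h
    rw [hrow x hx, ← ENNReal.mul_rpow_of_nonneg _ _ (by norm_num)] at h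
    calc (∫⁻ y in Ioi 0, k (x * y) * f y) ^ 2
        ≤ ((B * w x * ∫⁻ y in Ioi 0, k (x * y) * (f y ^ 2 * (w y)⁻¹)) ^ (1 / 2 : ℝ)) ^ 2 := by
          gcongr
      _ = _ := by
          rw [← ENNReal.rpow_natCast]
          exact e2 _
  calc ∫⁻ x in Ioi 0, (∫⁻ y in Ioi 0, k (x * y) * f y) ^ 2
      ≤ ∫⁻ x in Ioi 0, B * w x * ∫⁻ y in Ioi 0, k (x * y) * (f y ^ 2 * (w y)⁻¹) :=
        setLIntegral_mono' measurableSet_Ioi hcs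
    _ = ∫⁻ x in Ioi 0, ∫⁻ y in Ioi 0, B * w x * (k (x * y) * (f y ^ 2 * (w y)⁻¹)) := by
        refine lintegral_congr fun x => ?_
        rw [lintegral_const_mul'' _ (by fun_prop)]
    _ = ∫⁻ y in Ioi 0, ∫⁻ x in Ioi 0, B * w x * (k (x * y) * (f y ^ 2 * (w y)⁻¹)) := by
        refine lintegral_lintegral_swap ?_
        have hf' : AEMeasurable (fun p : ℝ × ℝ => f p.2)
            ((volume.restrict (Ioi (0 : ℝ))).prod (volume.restrict (Ioi (0 : ℝ)))) := hf.comp_snd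
        have hk' : Measurable fun p : ℝ × ℝ => k (p.1 * p.2) := by fun_prop
        simp only [Function.uncurry_def]
        fun_prop
    _ = ∫⁻ y in Ioi 0, B ^ 2 * f y ^ 2 := by
        refine setLIntegral_congr_fun measurableSet_Ioi fun y hy => ?_
        have : ∀ x, B * w x * (k (x * y) * (f y ^ 2 * (w y)⁻¹)) =
            B * (f y ^ 2 * (w y)⁻¹) * (k (y * x) * w x) := fun x => by
          rw [mul_comm x y]
          ring
        simp only [this]
        rw [lintegral_const_mul _ (by fun_prop), hrow y hy,
          show B * (f y ^ 2 * (w y)⁻¹) * (B * w y) = (w y * (w y)⁻¹) * (B ^ 2 * f y ^ 2) by ring,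
          hw0 y hy, one_mul]
    _ = _ := by rw [lintegral_const_mul'' _ (by fun_prop)]

lemma ENNReal.add_sq_le_four_mul (p q : ENNReal) : (p + q) ^ 2 ≤ 4 * (p ^ 2 + q ^ 2) := by
  have h : p + q ≤ 2 * max p q := by
    rw [two_mul]
    exact add_le_add (le_max_left _ _) (le_max_right _ _)
  calc (p + q) ^ 2 ≤ (2 * max p q) ^ 2 := by gcongr
    _ = 4 * max p q ^ 2 := by ring
    _ ≤ 4 * (p ^ 2 + q ^ 2) := by
        gcongr
        rcases max_choice p q with h | h <;> rw [h]
        · exact le_self_add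
        · exact le_add_self

lemma lintegral_min_rpow_lt_top {a : ℝ} (ha1 : -1 < a) (C : ℝ) :
    ∫⁻ z in Ioi 0, ENNReal.ofReal (C * min (z ^ (a / 2)) (1 / z)) *
      ENNReal.ofReal (z ^ (-(1 / 2) : ℝ)) < ⊤ := by
  have h1 : IntegrableOn (fun z : ℝ => |C| * z ^ (a / 2 + -(1 / 2))) (Ioc 0 1) := by
    have := (intervalIntegral.intervalIntegrable_rpow' (a := 0) (b := 1)
      (r := a / 2 + -(1 / 2)) (by linarith)).const_mul |C|
    rwa [intervalIntegrable_iff_integrableOn_Ioc_of_le zero_le_one] at this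
  have h2 : IntegrableOn (fun z : ℝ => |C| * z ^ (-(3 / 2) : ℝ)) (Ioi 1) :=
    (integrableOn_Ioi_rpow_of_lt (by norm_num) one_pos).const_mul _
  rw [← Ioc_union_Ioi_eq_Ioi (zero_le_one (α := ℝ)),
    lintegral_union measurableSet_Ioi (Ioc_disjoint_Ioi le_rfl)]
  refine ENNReal.add_lt_top.2 ⟨?_, ?_⟩
  · refine lt_of_le_of_lt (setLIntegral_mono' measurableSet_Ioc fun z hz => ?_)
      h1.lintegral_lt_top
    have hz0 : 0 < z := hz.1
    rw [← ENNReal.ofReal_mul' (by positivity), Real.rpow_add hz0, ← mul_assoc]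
    refine ENNReal.ofReal_le_ofReal ?_
    have : 0 ≤ min (z ^ (a / 2)) (1 / z) := by positivity
    gcongr
    · exact le_abs_self C
    · exact min_le_left _ _
  · refine lt_of_le_of_lt (setLIntegral_mono' measurableSet_Ioi fun z hz => ?_)
      h2.lintegral_lt_top
    have hz0 : 0 < z := one_pos.trans hz
    rw [← ENNReal.ofReal_mul' (by positivity),
      show (-(3 / 2) : ℝ) = -1 + -(1 / 2) by norm_num, Real.rpow_add hz0, ← mul_assoc,
      Real.rpow_neg_one, ← one_div]
    refine ENNReal.ofReal_le_ofReal ?_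
    have : 0 ≤ min (z ^ (a / 2)) (1 / z) := by positivity
    gcongr
    · exact le_abs_self C
    · exact min_le_right _ _

/-- `L²` boundedness of the Hankel transform with kernel
`z ^ (a / 2) * besselEntire ((a - 1) / 2) z`. -/
lemma exists_hankel_L2_bound {a : ℝ} (ha1 : -1 < a) (ha2 : a < 0) :
    ∃ C : ENNReal, C ≠ ⊤ ∧ ∀ f : ℝ → ℂ, IntegrableOn f (Ioi 0) →
      ∫⁻ x in Ioi 0, ‖∫ y in Ioi 0,
        (((x * y) ^ (a / 2) * besselEntire ((a - 1) / 2) (x * y) : ℝ) : ℂ) * f y‖ₑ ^ 2 ≤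
      C * ∫⁻ y in Ioi 0, ‖f y‖ₑ ^ 2 := by
  obtain ⟨A, C, hC, hA⟩ := exists_besselEntire_asymptotics ha1 ha2
  set K : ℝ → ℝ := fun z => z ^ (a / 2) * besselEntire ((a - 1) / 2) z with hK
  set k : ℝ → ENNReal := fun z => ENNReal.ofReal (C * min (z ^ (a / 2)) (1 / z)) with hk
  have hkm : Measurable k := by fun_prop
  set B := ∫⁻ z in Ioi 0, k z * ENNReal.ofReal (z ^ (-(1 / 2) : ℝ)) with hB
  have hBt : B ≠ ⊤ := (lintegral_min_rpow_lt_top ha1 C).ne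
  set P := ENNReal.ofReal (2 * Real.pi)
  refine ⟨4 * (‖A‖ₑ ^ 2 * (4 * (P + P)) + B ^ 2), ?_, fun f hf => ?_⟩
  · have : ‖A‖ₑ ≠ ⊤ := enorm_ne_top
    have : P ≠ ⊤ := ENNReal.ofReal_ne_top
    finiteness
  set E : ℝ → ℝ → ℂ := fun σ x =>
    ∫ y in Ioi 0, Complex.exp (Complex.I * ((σ * (x * y) : ℝ) : ℂ)) * f y with hE
  have hEm : ∀ σ, AEMeasurable (fun x => ‖E σ x‖ₑ ^ 2) (volume.restrict (Ioi 0)) := by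
    intro σ
    have hj : AEStronglyMeasurable (fun p : ℝ × ℝ =>
        Complex.exp (Complex.I * ((σ * (p.1 * p.2) : ℝ) : ℂ)) * f p.2)
        ((volume.restrict (Ioi (0 : ℝ))).prod (volume.restrict (Ioi (0 : ℝ)))) := by
      refine AEStronglyMeasurable.mul ?_ hf.1.comp_snd
      exact Continuous.aestronglyMeasurable (by fun_prop)
    exact hj.integral_prod_right'.enorm.pow_const 2
  have hEi : ∀ σ x, IntegrableOn
      (fun y => Complex.exp (Complex.I * ((σ * (x * y) : ℝ) : ℂ)) * f y) (Ioi 0) := by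
    intro σ x
    refine hf.bdd_mul (c := 1) (Continuous.aestronglyMeasurable (by fun_prop))
      (ae_of_all _ fun y => ?_)
    rw [Complex.norm_exp]
    simp
  have hpt : ∀ x ∈ Ioi (0 : ℝ), ‖∫ y in Ioi 0, ((K (x * y) : ℝ) : ℂ) * f y‖ₑ ≤
      ‖A‖ₑ * (‖E 1 x‖ₑ + ‖E (-1) x‖ₑ) + ∫⁻ y in Ioi 0, k (x * y) * ‖f y‖ₑ := by
    intro x hx
    by_cases hi : IntegrableOn (fun y => ((K (x * y) : ℝ) : ℂ) * f y) (Ioi 0)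
    swap
    · rw [integral_undef hi]
      simp
    set M : ℝ → ℂ := fun y => A / 2 * (Complex.exp (Complex.I * ((1 * (x * y) : ℝ) : ℂ)) * f y) +
      (starRingEnd ℂ A) / 2 * (Complex.exp (Complex.I * ((-1 * (x * y) : ℝ) : ℂ)) * f y) with hM
    have hM1 := (hEi 1 x).const_mul (A / 2)
    have hM2 := (hEi (-1) x).const_mul ((starRingEnd ℂ A) / 2)
    have hMi : IntegrableOn M (Ioi 0) := hM1.add hM2
    have hMint : ∫ y in Ioi 0, M y = A / 2 * E 1 x + (starRingEnd ℂ A) / 2 * E (-1) x := by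
      rw [hM, integral_add hM1 hM2, integral_const_mul, integral_const_mul]
    have hMeq : ∀ y, M y =
        (((A * Complex.exp (Complex.I * ((x * y : ℝ) : ℂ))).re : ℝ) : ℂ) * f y := by
      intro y
      rw [Complex.re_eq_add_conj, map_mul, ← Complex.exp_conj, map_mul, Complex.conj_I,
        Complex.conj_ofReal]
      simp only [hM, one_mul, neg_mul, Complex.ofReal_neg, mul_neg]
      ring
    have hsplit : ∫ y in Ioi 0, ((K (x * y) : ℝ) : ℂ) * f y =
        (∫ y in Ioi 0, M y) + ∫ y in Ioi 0, (((K (x * y) : ℝ) : ℂ) * f y - M y) := by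
      rw [integral_sub hi hMi]
      ring
    have hhalf : ‖(2 : ℂ)⁻¹‖ₑ ≤ 1 := by
      rw [← ofReal_norm]
      norm_num
    rw [hsplit]
    refine (enorm_add_le _ _).trans (add_le_add ?_ ?_)
    · rw [hMint, mul_add]
      refine (enorm_add_le _ _).trans (add_le_add ?_ ?_) <;>
      · rw [enorm_mul, div_eq_mul_inv, enorm_mul]
        gcongr
        refine (mul_le_mul' le_rfl hhalf).trans ?_
        simp [← ofReal_norm]
    · refine (enorm_integral_le_lintegral_enorm _).trans
        (setLIntegral_mono' measurableSet_Ioi fun y hy => ?_)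
      rw [hMeq, ← sub_mul, enorm_mul]
      gcongr
      rw [← Complex.ofReal_sub, ← ofReal_norm, Complex.norm_real]
      exact ENNReal.ofReal_le_ofReal (hA (x * y) (mul_pos hx hy))
  have hS := lintegral_schur_mul_sq_le hkm hf.1.enorm
  have hP1 := lintegral_exp_transform_sq_le hf (σ := 1) (by norm_num)
  have hP2 := lintegral_exp_transform_sq_le hf (σ := -1) (by norm_num)
  calc ∫⁻ x in Ioi 0, ‖∫ y in Ioi 0, ((K (x * y) : ℝ) : ℂ) * f y‖ₑ ^ 2
      ≤ ∫⁻ x in Ioi 0, 4 * (‖A‖ₑ ^ 2 * (4 * (‖E 1 x‖ₑ ^ 2 + ‖E (-1) x‖ₑ ^ 2)) +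
          (∫⁻ y in Ioi 0, k (x * y) * ‖f y‖ₑ) ^ 2) := by
        refine setLIntegral_mono' measurableSet_Ioi fun x hx => ?_
        refine ((pow_le_pow_left' (hpt x hx) 2).trans (ENNReal.add_sq_le_four_mul _ _)).trans ?_
        rw [mul_pow]
        gcongr
        exact ENNReal.add_sq_le_four_mul _ _
    _ = 4 * (‖A‖ₑ ^ 2 * (4 * ((∫⁻ x in Ioi 0, ‖E 1 x‖ₑ ^ 2) +
          ∫⁻ x in Ioi 0, ‖E (-1) x‖ₑ ^ 2)) +
          ∫⁻ x in Ioi 0, (∫⁻ y in Ioi 0, k (x * y) * ‖f y‖ₑ) ^ 2) := by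
        have m1 := hEm 1
        have m2 := hEm (-1)
        rw [lintegral_const_mul' _ _ (by norm_num), lintegral_add_left' (by fun_prop),
          lintegral_const_mul'' _ (by fun_prop), lintegral_const_mul'' _ (by fun_prop),
          lintegral_add_left' m1]
    _ ≤ 4 * (‖A‖ₑ ^ 2 * (4 * (P * (∫⁻ y in Ioi 0, ‖f y‖ₑ ^ 2) +
          P * ∫⁻ y in Ioi 0, ‖f y‖ₑ ^ 2)) + B ^ 2 * ∫⁻ y in Ioi 0, ‖f y‖ₑ ^ 2) := by
        gcongr
    _ = _ := by ring

/-! ### Real interpolation between `L² → L²` and `L¹ → L^∞` -/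

lemma setLIntegral_lt_le_rpow_mul {X : Type*} [MeasurableSpace X] {μ : Measure X} {g : X → ℝ}
    (hg : Measurable g) {p s : ℝ} (hp : 1 < p) (hs : 0 < s) :
    ∫⁻ x in {x | s < g x}, ENNReal.ofReal (g x) ∂μ ≤
      ENNReal.ofReal (s ^ (1 - p)) * ∫⁻ x, ENNReal.ofReal (g x ^ p) ∂μ := by
  rw [← lintegral_const_mul _ (by fun_prop)]
  refine (setLIntegral_mono' (measurableSet_lt measurable_const hg) fun x hx => ?_).trans
    (setLIntegral_le_lintegral _ _)
  have hx' : s < g x := hx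
  have hg0 : 0 < g x := hs.trans hx'
  rw [← ENNReal.ofReal_mul (by positivity)]
  refine ENNReal.ofReal_le_ofReal ?_
  calc g x = g x ^ (1 - p) * g x ^ p := by rw [← Real.rpow_add hg0]; simp
    _ ≤ s ^ (1 - p) * g x ^ p := by
      gcongr ?_ * _
      exact Real.rpow_le_rpow_of_nonpos hs hx'.le (by linarith)

lemma setLIntegral_rpow_Ioc_le {Λ q : ℝ} (hΛ : 0 ≤ Λ) (hq : 0 < q) :
    ∫⁻ l in Ioc 0 Λ, ENNReal.ofReal (l ^ (q - 1)) = ENNReal.ofReal (Λ ^ q / q) := by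
  have hi := intervalIntegral.intervalIntegrable_rpow' (a := 0) (b := Λ) (r := q - 1)
    (by linarith)
  rw [intervalIntegrable_iff_integrableOn_Ioc_of_le hΛ] at hi
  rw [← ofReal_integral_eq_lintegral_ofReal hi ((ae_restrict_iff' measurableSet_Ioc).2
    (ae_of_all _ fun l hl => Real.rpow_nonneg hl.1.le _)),
    ← intervalIntegral.integral_of_le hΛ, integral_rpow (Or.inl (by linarith))]
  simp [hq.ne']

lemma lintegral_rpow_le_of_interpolation {X : Type*} [MeasurableSpace X] {μ : Measure X}
    [SFinite μ] {g h : X → ℝ} (hg : Measurable g) (hg0 : ∀ x, 0 ≤ g x) (hh : AEMeasurable h μ)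
    (hh0 : ∀ x, 0 ≤ h x) {r K M : ℝ} (hr : 2 < r) (hK : 0 < K) (hM : 0 < M) {B : ENNReal}
    (hN : ∫⁻ x, ENNReal.ofReal (g x ^ (r / (r - 1))) ∂μ ≤ ENNReal.ofReal M)
    (H : ∀ s > 0, ∃ h₁ h₂ : X → ENNReal, AEMeasurable h₂ μ ∧
      (∀ᵐ x ∂μ, ENNReal.ofReal (h x) ≤ h₁ x + h₂ x) ∧
      (∀ᵐ x ∂μ, h₁ x ≤ ENNReal.ofReal K * ∫⁻ x in {x | s < g x}, ENNReal.ofReal (g x) ∂μ) ∧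
      ∫⁻ x, h₂ x ^ 2 ∂μ ≤ B * ∫⁻ x in {x | g x ≤ s}, ENNReal.ofReal (g x ^ 2) ∂μ) :
    ∫⁻ x, ENNReal.ofReal (h x ^ r) ∂μ ≤
      B * ENNReal.ofReal (4 * r / (r - 2) * (2 * K * M) ^ (r - 2) * M) := by
  set p := r / (r - 1) with hp
  have hr1 : 0 < r - 1 := by linarith
  have hp1 : 1 < p := by rw [hp, one_lt_div hr1]; linarith
  have hpr : (r - 1) * (1 - p) = -1 := by rw [hp]; field_simp; ring
  have hKM : 0 < 2 * K * M := by positivity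
  set s : ℝ → ℝ := fun l => (2 * K * M / l) ^ (r - 1) with hs
  have hsm : Measurable s := by fun_prop
  have hs0 : ∀ l > 0, 0 < s l := fun l hl => by positivity
  set G : X → ENNReal := fun x => ENNReal.ofReal (g x ^ 2) with hG
  have hGm : Measurable G := by fun_prop
  have hdist : ∀ l ∈ Ioi (0 : ℝ), μ {x | l < h x} * ENNReal.ofReal (l ^ (r - 1)) ≤
      B * ENNReal.ofReal (4 * l ^ (r - 2 - 1)) * ∫⁻ x in {x | g x ≤ s l}, G x ∂μ := by
    intro l hl
    have hl0 : 0 < l := hl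
    obtain ⟨h₁, h₂, hm, hsum, hb, hL2⟩ := H (s l) (hs0 l hl)
    have hb' : ∀ᵐ x ∂μ, h₁ x ≤ ENNReal.ofReal (l / 2) := by
      filter_upwards [hb] with x hx
      refine hx.trans ?_
      calc ENNReal.ofReal K * ∫⁻ x in {x | s l < g x}, ENNReal.ofReal (g x) ∂μ
          ≤ ENNReal.ofReal K * (ENNReal.ofReal ((s l) ^ (1 - p)) * ENNReal.ofReal M) := by
            gcongr
            exact (setLIntegral_lt_le_rpow_mul hg hp1 (hs0 l hl)).trans (by gcongr)
        _ = ENNReal.ofReal (l / 2) := by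
            rw [← ENNReal.ofReal_mul (Real.rpow_nonneg (hs0 l hl).le _),
              ← ENNReal.ofReal_mul hK.le]
            congr 1
            rw [hs, ← Real.rpow_mul (by positivity), hpr, Real.rpow_neg_one]
            field_simp
    have hsub : μ {x | l < h x} ≤ μ {x | ENNReal.ofReal (l / 2) ^ 2 ≤ h₂ x ^ 2} := by
      refine measure_mono_ae ?_
      filter_upwards [hsum, hb'] with x hx1 hx2 hx
      have hx' : l < h x := hx
      refine pow_le_pow_left' (?_ : ENNReal.ofReal (l / 2) ≤ h₂ x) 2
      by_contra! hlt
      have : ENNReal.ofReal (h x) < ENNReal.ofReal l := by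
        calc ENNReal.ofReal (h x) ≤ h₁ x + h₂ x := hx1
          _ < ENNReal.ofReal (l / 2) + ENNReal.ofReal (l / 2) :=
            ENNReal.add_lt_add_of_le_of_lt (ne_top_of_le_ne_top ENNReal.ofReal_ne_top hx2) hx2 hlt
          _ = ENNReal.ofReal l := by
            rw [← ENNReal.ofReal_add (by positivity) (by positivity), add_halves]
      exact absurd this (not_lt.2 (ENNReal.ofReal_le_ofReal hx'.le))
    have hcheb := mul_meas_ge_le_lintegral₀ (hm.pow_const 2) (ENNReal.ofReal (l / 2) ^ 2)
    calc μ {x | l < h x} * ENNReal.ofReal (l ^ (r - 1))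
        ≤ μ {x | ENNReal.ofReal (l / 2) ^ 2 ≤ h₂ x ^ 2} * ENNReal.ofReal (l ^ (r - 1)) := by
          gcongr
      _ = ENNReal.ofReal (4 * l ^ (r - 2 - 1)) * (ENNReal.ofReal (l / 2) ^ 2 *
          μ {x | ENNReal.ofReal (l / 2) ^ 2 ≤ h₂ x ^ 2}) := by
          rw [← mul_assoc, mul_comm, ← ENNReal.ofReal_pow (by positivity),
            ← ENNReal.ofReal_mul (by positivity)]
          congr 2
          rw [show r - 1 = r - 2 - 1 + (2 : ℕ) by push_cast; ring, Real.rpow_add_natCast hl0.ne']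
          ring
      _ ≤ ENNReal.ofReal (4 * l ^ (r - 2 - 1)) * (B * ∫⁻ x in {x | g x ≤ s l}, G x ∂μ) := by
          exact mul_le_mul' le_rfl (hcheb.trans hL2)
      _ = _ := by ring
  set S : Set (ℝ × X) := {q | g q.2 ≤ s q.1} with hS
  have hSm : MeasurableSet S := measurableSet_le (by fun_prop) (by fun_prop)
  set J : ℝ → X → ENNReal := fun l x =>
    S.indicator (fun q => ENNReal.ofReal (4 * q.1 ^ (r - 2 - 1)) * G q.2) (l, x) with hJ
  have hJm : Measurable (Function.uncurry J) := by
    have : Measurable fun q : ℝ × X => ENNReal.ofReal (4 * q.1 ^ (r - 2 - 1)) * G q.2 := by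
      fun_prop
    exact this.indicator hSm
  have hinner : ∀ x, ∫⁻ l in Ioi 0, J l x ≤
      ENNReal.ofReal (4 / (r - 2) * (2 * K * M) ^ (r - 2)) * ENNReal.ofReal (g x ^ p) := by
    intro x
    rcases (hg0 x).eq_or_lt with hx | hx
    · have : ∀ l, J l x = 0 := fun l => by simp [hJ, hG, indicator, ← hx]
      simp [this]
    set Λ := 2 * K * M * g x ^ (1 - p) with hΛ
    have hΛ0 : 0 < Λ := by positivity
    have hle : ∀ l ∈ Ioi (0 : ℝ), J l x ≤
        (Ioc 0 Λ).indicator (fun l => ENNReal.ofReal (4 * g x ^ 2) *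
          ENNReal.ofReal (l ^ (r - 2 - 1))) l := by
      intro l hl
      have hl0 : 0 < l := hl
      by_cases hlx : (l, x) ∈ S
      · have hgx : g x ≤ s l := hlx
        have h1 := Real.rpow_le_rpow_of_nonpos hx hgx (by linarith : 1 - p ≤ 0)
        rw [hs, ← Real.rpow_mul (by positivity), hpr, Real.rpow_neg_one, inv_div,
          div_le_iff₀ hKM] at h1
        have hmem : l ∈ Ioc 0 Λ := ⟨hl0, by rw [hΛ]; linarith⟩
        rw [indicator_of_mem hmem]
        simp only [hJ, indicator_of_mem hlx, hG]
        rw [← ENNReal.ofReal_mul (by positivity), ← ENNReal.ofReal_mul (by positivity)]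
        refine le_of_eq ?_
        congr 1
        ring
      · simp [hJ, indicator_of_notMem hlx]
    calc ∫⁻ l in Ioi 0, J l x ≤ ∫⁻ l in Ioi 0, (Ioc 0 Λ).indicator (fun l =>
          ENNReal.ofReal (4 * g x ^ 2) * ENNReal.ofReal (l ^ (r - 2 - 1))) l :=
          setLIntegral_mono' measurableSet_Ioi hle
      _ ≤ ∫⁻ l, (Ioc 0 Λ).indicator (fun l =>
          ENNReal.ofReal (4 * g x ^ 2) * ENNReal.ofReal (l ^ (r - 2 - 1))) l :=
          setLIntegral_le_lintegral _ _
      _ = ENNReal.ofReal (4 * g x ^ 2) * ENNReal.ofReal (Λ ^ (r - 2) / (r - 2)) := by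
          rw [lintegral_indicator measurableSet_Ioc, lintegral_const_mul _ (by fun_prop),
            setLIntegral_rpow_Ioc_le hΛ0.le (by linarith)]
      _ = _ := by
          rw [← ENNReal.ofReal_mul (by positivity), ← ENNReal.ofReal_mul (by
            have : 0 < r - 2 := by linarith
            positivity)]
          congr 1
          rw [hΛ, Real.mul_rpow hKM.le (by positivity), ← Real.rpow_mul hx.le]
          have : g x ^ p = g x ^ 2 * g x ^ ((1 - p) * (r - 2)) := by
            rw [← Real.rpow_natCast, ← Real.rpow_add hx]
            congr 1
            push_cast
            linear_combination -hpr
          rw [this]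
          ring
  rw [lintegral_rpow_eq_lintegral_meas_lt_mul μ (ae_of_all _ hh0) hh (by linarith)]
  calc ENNReal.ofReal r * ∫⁻ l in Ioi 0, μ {x | l < h x} * ENNReal.ofReal (l ^ (r - 1))
      ≤ ENNReal.ofReal r * ∫⁻ l in Ioi 0, B * ∫⁻ x, J l x ∂μ := by
        refine mul_le_mul' le_rfl (setLIntegral_mono' measurableSet_Ioi fun l hl => ?_)
        refine (hdist l hl).trans (le_of_eq ?_)
        rw [mul_assoc, ← lintegral_const_mul _ hGm,
          ← lintegral_indicator (measurableSet_le hg measurable_const)]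
        rfl
    _ = ENNReal.ofReal r * (B * ∫⁻ x, (∫⁻ l in Ioi 0, J l x) ∂μ) := by
        rw [lintegral_const_mul _ hJm.lintegral_prod_right,
          lintegral_lintegral_swap hJm.aemeasurable]
    _ ≤ ENNReal.ofReal r * (B * ∫⁻ x,
          ENNReal.ofReal (4 / (r - 2) * (2 * K * M) ^ (r - 2)) * ENNReal.ofReal (g x ^ p) ∂μ) := by
        gcongr
        exact hinner _
    _ ≤ ENNReal.ofReal r * (B *
          (ENNReal.ofReal (4 / (r - 2) * (2 * K * M) ^ (r - 2)) * ENNReal.ofReal M)) := by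
        rw [lintegral_const_mul _ (by fun_prop)]
        gcongr
    _ = _ := by
        have : 0 < r - 2 := by linarith
        rw [mul_left_comm, ← ENNReal.ofReal_mul (by positivity),
          ← ENNReal.ofReal_mul (by linarith)]
        congr 2
        ring

/-! ### The Schrödinger operator -/

lemma k1_pos {a x : ℝ} (hx : 0 < x) : 0 < k1 a x :=
  lt_min one_pos (Real.rpow_pos_of_pos hx _)

lemma measurable_k1 (a : ℝ) : Measurable (k1 a) := by
  unfold k1
  fun_prop

lemma exists_Skernel_eq (a : ℝ) {t : ℝ} (ht : t ≠ 0) :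
    ∃ c m : ℝ → ℂ, Continuous c ∧ Continuous m ∧ (∀ x, ‖c x‖ = 1) ∧ (∀ y, ‖m y‖ = 1) ∧
      ∀ x > 0, ∀ y > 0, Skernel a x y t =
        c x * (((2 * |t|) ^ (-(a + 1) / 2) : ℝ) : ℂ) *
          (besselEntire ((a - 1) / 2) (x * y / (2 * |t|)) : ℂ) * m y := by
  have hnorm : ∀ s : ℝ, ‖Complex.exp (Complex.I * (s : ℂ))‖ = 1 := fun s => by
    rw [Complex.norm_exp]
    simp
  have hnorm' : ∀ s : ℝ, ‖Complex.exp (-Complex.I * (s : ℂ))‖ = 1 := fun s => by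
    rw [Complex.norm_exp]
    simp
  have hJ : ∀ x > 0, ∀ y > 0, (((x * y / (2 * |t|)) ^ ((1 - a) / 2) : ℝ) : ℂ) *
      besselJ (((a - 1) / 2 : ℝ) : ℂ) (x * y / (2 * |t|)) =
      (besselEntire ((a - 1) / 2) (x * y / (2 * |t|)) : ℂ) := by
    intro x hx y hy
    have ht' : 0 < |t| := abs_pos.2 ht
    rw [← rpow_neg_mul_besselJ _ (by positivity), show -((a - 1) / 2) = (1 - a) / 2 by ring]
  by_cases h : 0 < t
  · refine ⟨fun x => Complex.exp (-(Complex.I) * (((a + 1) * Real.pi / 4 : ℝ) : ℂ)) *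
        Complex.exp (Complex.I * ((x ^ 2 / (4 * |t|) : ℝ) : ℂ)),
      fun y => Complex.exp (Complex.I * ((y ^ 2 / (4 * |t|) : ℝ) : ℂ)), by fun_prop, by fun_prop,
      fun x => by rw [norm_mul, hnorm, hnorm', one_mul], fun y => hnorm _, fun x hx y hy => ?_⟩
    rw [← hJ x hx y hy, Skernel, if_pos h, add_div, Complex.ofReal_add, mul_add, Complex.exp_add]
    ring
  · refine ⟨fun x => Complex.exp ((Complex.I) * (((a + 1) * Real.pi / 4 : ℝ) : ℂ)) *
        Complex.exp (-Complex.I * ((x ^ 2 / (4 * |t|) : ℝ) : ℂ)),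
      fun y => Complex.exp (-Complex.I * ((y ^ 2 / (4 * |t|) : ℝ) : ℂ)), by fun_prop, by fun_prop,
      fun x => by rw [norm_mul, hnorm, hnorm', one_mul], fun y => hnorm' _, fun x hx y hy => ?_⟩
    rw [← hJ x hx y hy, Skernel, if_neg h, add_div, Complex.ofReal_add, mul_add, Complex.exp_add]
    ring

lemma exists_k1_mul_norm_Skernel_le {a : ℝ} (ha1 : -1 < a) (ha2 : a < 0) :
    ∃ C > 0, ∀ t ≠ 0, ∀ x > 0, ∀ y > 0, k1 a x * ‖Skernel a x y t‖ ≤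
      C * (|t| ^ (-(a + 1) / 2) + |t| ^ (-(1 / 2) : ℝ)) * (k1 a y)⁻¹ := by
  obtain ⟨A, C, hC, hA⟩ := exists_besselEntire_asymptotics ha1 ha2
  set H := besselEntire ((a - 1) / 2) with hH
  set D := C + ‖A‖ + 1 with hD
  have hD0 : 0 < D := by positivity
  have hbound : ∀ z > 0, |H z| ≤ D * (1 + z ^ (-(a / 2))) := by
    intro z hz
    have hzp : 0 < z ^ (a / 2) := Real.rpow_pos_of_pos hz _
    have b2 : |(A * Complex.exp (Complex.I * z)).re| ≤ ‖A‖ := by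
      refine (Complex.abs_re_le_norm _).trans (le_of_eq ?_)
      rw [norm_mul, Complex.norm_exp]
      simp
    have b1 : z ^ (a / 2) * |H z| ≤ C * z ^ (a / 2) + ‖A‖ := by
      rw [← abs_of_pos hzp, ← abs_mul, abs_of_pos hzp]
      have h1 := hA z hz
      have h2 : C * min (z ^ (a / 2)) (1 / z) ≤ C * z ^ (a / 2) := by
        gcongr
        exact min_le_left _ _
      have h3 := abs_sub_abs_le_abs_sub (z ^ (a / 2) * H z) (A * Complex.exp (Complex.I * z)).re
      linarith
    rw [Real.rpow_neg hz.le]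
    have e : |H z| = (z ^ (a / 2))⁻¹ * (z ^ (a / 2) * |H z|) := by field_simp
    rw [e]
    calc (z ^ (a / 2))⁻¹ * (z ^ (a / 2) * |H z|)
        ≤ (z ^ (a / 2))⁻¹ * (C * z ^ (a / 2) + ‖A‖) := by gcongr
      _ = C + ‖A‖ * (z ^ (a / 2))⁻¹ := by field_simp
      _ ≤ D * (1 + (z ^ (a / 2))⁻¹) := by
        have : 0 < (z ^ (a / 2))⁻¹ := by positivity
        nlinarith [norm_nonneg A, mul_nonneg hC this.le]
  refine ⟨D, hD0, fun t ht x hx y hy => ?_⟩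
  obtain ⟨c, m, -, -, hc, hm, hS⟩ := exists_Skernel_eq a ht
  have ht' : 0 < |t| := abs_pos.2 ht
  set τ := 2 * |t| with hτ
  have hτ0 : 0 < τ := by positivity
  have hk : 0 < k1 a x := k1_pos hx
  have hky : 0 < k1 a y := k1_pos hy
  have hkx1 : k1 a x ≤ 1 := min_le_left _ _
  have hkx2 : k1 a x * x ^ (-(a / 2)) ≤ 1 := by
    calc k1 a x * x ^ (-(a / 2)) ≤ x ^ (a / 2) * x ^ (-(a / 2)) := by
          gcongr
          exact min_le_right _ _
      _ = 1 := by rw [← Real.rpow_add hx]; simp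
  have hky1 : 1 ≤ (k1 a y)⁻¹ := (one_le_inv₀ hky).2 (min_le_left _ _)
  have hky2 : y ^ (-(a / 2)) ≤ (k1 a y)⁻¹ := by
    rw [Real.rpow_neg hy.le]
    exact inv_anti₀ hky (min_le_right _ _)
  have hττ : ∀ e : ℝ, e ≤ 0 → τ ^ e ≤ |t| ^ e := fun e he =>
    Real.rpow_le_rpow_of_nonpos ht' (by rw [hτ]; linarith) he
  rw [hS x hx y hy, norm_mul, norm_mul, norm_mul, hc, hm, one_mul, mul_one, Complex.norm_real,
    Complex.norm_real, Real.norm_eq_abs, Real.norm_eq_abs, abs_of_pos (Real.rpow_pos_of_pos hτ0 _)]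
  have hz : 0 < x * y / τ := by positivity
  have hzpow : τ ^ (-(a + 1) / 2) * (x * y / τ) ^ (-(a / 2)) =
      τ ^ (-(1 / 2) : ℝ) * (x ^ (-(a / 2)) * y ^ (-(a / 2))) := by
    rw [Real.div_rpow (by positivity) hτ0.le, Real.mul_rpow hx.le hy.le,
      show -(a + 1) / 2 = -(1 / 2) + -(a / 2) by ring, Real.rpow_add hτ0]
    field_simp
  calc k1 a x * (τ ^ (-(a + 1) / 2) * |H (x * y / τ)|)
      ≤ k1 a x * (τ ^ (-(a + 1) / 2) * (D * (1 + (x * y / τ) ^ (-(a / 2))))) := by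
        gcongr
        exact hbound _ hz
    _ = D * (τ ^ (-(a + 1) / 2) * (k1 a x * 1) +
          τ ^ (-(1 / 2) : ℝ) * (k1 a x * x ^ (-(a / 2)) * y ^ (-(a / 2)))) := by
        linear_combination k1 a x * D * hzpow
    _ ≤ D * (|t| ^ (-(a + 1) / 2) * (1 * (k1 a y)⁻¹) +
          |t| ^ (-(1 / 2) : ℝ) * (1 * (k1 a y)⁻¹)) := by
        have h1 := hττ (-(a + 1) / 2) (by linarith)
        have h2 := hττ (-(1 / 2)) (by norm_num)
        gcongr
    _ = _ := by ring

/-- The measure with respect to which `k1 * S_a(t) * k1⁻¹` maps `L¹` to `L^∞` and `L²` to `L²`. -/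
noncomputable def interpMeasure (a : ℝ) : Measure ℝ :=
  (volume.restrict (Ioi 0)).withDensity fun x => ENNReal.ofReal (k1 a x ^ (-2 : ℝ) * x ^ a)

instance (a : ℝ) : SFinite (interpMeasure a) := by
  unfold interpMeasure
  infer_instance

lemma lintegral_interpMeasure (a : ℝ) (F : ℝ → ENNReal) :
    ∫⁻ x, F x ∂(interpMeasure a) =
      ∫⁻ x in Ioi 0, ENNReal.ofReal (k1 a x ^ (-2 : ℝ) * x ^ a) * F x := by
  have := measurable_k1 a
  exact lintegral_withDensity_eq_lintegral_mul_non_measurable _ (by fun_prop)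
    (ae_of_all _ fun x => ENNReal.ofReal_lt_top) F

lemma ae_interpMeasure_pos (a : ℝ) : ∀ᵐ x ∂(interpMeasure a), 0 < x :=
  (withDensity_absolutelyContinuous _ _).ae_le (ae_restrict_mem measurableSet_Ioi)

/-- The space of functions on which `S_a(t)` is given by an absolutely convergent integral. -/
def SopDomain (a : ℝ) (φ : ℝ → ℂ) : Prop :=
  IntegrableOn (fun y => (((k1 a y)⁻¹ * y ^ a : ℝ) : ℂ) * φ y) (Ioi 0)

lemma SopDomain.indicator {a : ℝ} {φ : ℝ → ℂ} (h : SopDomain a φ) {E : Set ℝ}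
    (hE : MeasurableSet E) : SopDomain a (E.indicator φ) := by
  refine (Integrable.indicator h hE).congr (ae_of_all _ fun y => ?_)
  by_cases hy : y ∈ E <;> simp [hy]

lemma SopDomain.aestronglyMeasurable {a : ℝ} {φ : ℝ → ℂ} (h : SopDomain a φ) :
    AEStronglyMeasurable φ (volume.restrict (Ioi 0)) := by
  have := measurable_k1 a
  have hm : Measurable fun y => ((((k1 a y)⁻¹ * y ^ a)⁻¹ : ℝ) : ℂ) := by fun_prop
  refine (hm.aestronglyMeasurable.mul h.1).congr ?_
  filter_upwards [ae_restrict_mem measurableSet_Ioi] with y hy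
  have : ((k1 a y)⁻¹ * y ^ a) ≠ 0 :=
    (mul_pos (inv_pos.2 (k1_pos hy)) (Real.rpow_pos_of_pos hy a)).ne'
  rw [Pi.mul_apply, ← mul_assoc, ← Complex.ofReal_mul, inv_mul_cancel₀ this]
  simp

lemma SopDomain.integrableOn_Skernel {a : ℝ} (ha1 : -1 < a) (ha2 : a < 0) {φ : ℝ → ℂ}
    (h : SopDomain a φ) {t x : ℝ} (ht : t ≠ 0) (hx : 0 < x) :
    IntegrableOn (fun y => Skernel a x y t * φ y * ((y ^ a : ℝ) : ℂ)) (Ioi 0) := by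
  obtain ⟨C, hC, hS⟩ := exists_k1_mul_norm_Skernel_le ha1 ha2
  obtain ⟨c, m, -, hmc, -, -, hSeq⟩ := exists_Skernel_eq a ht
  have hH := continuous_besselEntire (ν := (a - 1) / 2) (by linarith)
  have hmeas : AEStronglyMeasurable (fun y => Skernel a x y t * φ y * ((y ^ a : ℝ) : ℂ))
      (volume.restrict (Ioi 0)) := by
    have h1 : AEStronglyMeasurable (fun y => c x * (((2 * |t|) ^ (-(a + 1) / 2) : ℝ) : ℂ) *
          (besselEntire ((a - 1) / 2) (x * y / (2 * |t|)) : ℂ) * m y)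
          (volume.restrict (Ioi 0)) := Continuous.aestronglyMeasurable (by fun_prop)
    have h2 : Measurable fun y : ℝ => ((y ^ a : ℝ) : ℂ) := by fun_prop
    refine ((h1.mul h.aestronglyMeasurable).mul h2.aestronglyMeasurable).congr ?_
    filter_upwards [ae_restrict_mem measurableSet_Ioi] with y hy
    simp only [Pi.mul_apply]
    rw [hSeq x hx y hy]
  refine (h.norm.const_mul
    ((k1 a x)⁻¹ * (C * (|t| ^ (-(a + 1) / 2) + |t| ^ (-(1 / 2) : ℝ))))).mono' hmeas ?_
  filter_upwards [ae_restrict_mem measurableSet_Ioi] with y hy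
  have hy0 : 0 < y := hy
  have hk := k1_pos (a := a) hx
  have hky := k1_pos (a := a) hy0
  have hb := hS t ht x hx y hy
  rw [norm_mul, norm_mul, norm_mul, Complex.norm_real, Complex.norm_real, Real.norm_eq_abs,
    Real.norm_eq_abs, abs_of_pos (Real.rpow_pos_of_pos hy0 a),
    abs_of_pos (by positivity : 0 < (k1 a y)⁻¹ * y ^ a)]
  have hb' : ‖Skernel a x y t‖ ≤ (k1 a x)⁻¹ *
      (C * (|t| ^ (-(a + 1) / 2) + |t| ^ (-(1 / 2) : ℝ)) * (k1 a y)⁻¹) := by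
    rw [← div_eq_inv_mul, le_div_iff₀ hk]
    linarith
  calc ‖Skernel a x y t‖ * ‖φ y‖ * y ^ a
      ≤ (k1 a x)⁻¹ * (C * (|t| ^ (-(a + 1) / 2) + |t| ^ (-(1 / 2) : ℝ)) * (k1 a y)⁻¹) *
        ‖φ y‖ * y ^ a := by gcongr
    _ = _ := by ring

lemma Sop_eq_mul_integral (a : ℝ) {t : ℝ} (ht : t ≠ 0) :
    ∃ c m : ℝ → ℂ, Continuous c ∧ Continuous m ∧ (∀ x, ‖c x‖ = 1) ∧ (∀ y, ‖m y‖ = 1) ∧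
      ∀ φ : ℝ → ℂ, ∀ x > 0, Sop a t φ x =
        c x * (((2 * |t|) ^ (-(a + 1) / 2) : ℝ) : ℂ) *
          ∫ y in Ioi 0, (besselEntire ((a - 1) / 2) (x * y / (2 * |t|)) : ℂ) *
            (m y * φ y * ((y ^ a : ℝ) : ℂ)) := by
  obtain ⟨c, m, hcc, hmc, hc, hm, hS⟩ := exists_Skernel_eq a ht
  refine ⟨c, m, hcc, hmc, hc, hm, fun φ x hx => ?_⟩
  rw [Sop, ← integral_const_mul]
  refine setIntegral_congr_fun measurableSet_Ioi fun y hy => ?_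
  rw [hS x hx y hy]
  ring

lemma SopDomain.aestronglyMeasurable_Sop {a : ℝ} (ha1 : -1 < a) {φ : ℝ → ℂ}
    (h : SopDomain a φ) {t : ℝ} (ht : t ≠ 0) :
    AEStronglyMeasurable (Sop a t φ) (volume.restrict (Ioi 0)) := by
  obtain ⟨c, m, hcc, hmc, -, -, hS⟩ := Sop_eq_mul_integral a ht
  have hH := continuous_besselEntire (ν := (a - 1) / 2) (by linarith)
  have hj : AEStronglyMeasurable (fun p : ℝ × ℝ =>
      (besselEntire ((a - 1) / 2) (p.1 * p.2 / (2 * |t|)) : ℂ) *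
        (m p.2 * φ p.2 * ((p.2 ^ a : ℝ) : ℂ)))
      ((volume.restrict (Ioi (0 : ℝ))).prod (volume.restrict (Ioi (0 : ℝ)))) := by
    have h2 : Measurable fun p : ℝ × ℝ => ((p.2 ^ a : ℝ) : ℂ) := by fun_prop
    refine AEStronglyMeasurable.mul (Continuous.aestronglyMeasurable (by fun_prop))
      ((AEStronglyMeasurable.mul (Continuous.aestronglyMeasurable (by fun_prop))
        h.aestronglyMeasurable.comp_snd).mul h2.aestronglyMeasurable)
  have hc' : AEStronglyMeasurable (fun x => c x * (((2 * |t|) ^ (-(a + 1) / 2) : ℝ) : ℂ))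
      (volume.restrict (Ioi 0)) := Continuous.aestronglyMeasurable (by fun_prop)
  refine (hc'.mul hj.integral_prod_right').congr ?_
  filter_upwards [ae_restrict_mem measurableSet_Ioi] with x hx
  rw [hS φ x hx]
  rfl

/-- Weighted dispersive estimate `L¹ → L^∞`. -/
lemma exists_dispersive_bound {a : ℝ} (ha1 : -1 < a) (ha2 : a < 0) :
    ∃ C > 0, ∀ t ≠ 0, ∀ φ : ℝ → ℂ, ∀ x > 0, ENNReal.ofReal (k1 a x) * ‖Sop a t φ x‖ₑ ≤
      ENNReal.ofReal (C * (|t| ^ (-(a + 1) / 2) + |t| ^ (-(1 / 2) : ℝ))) *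
        ∫⁻ y, ENNReal.ofReal (k1 a y) * ‖φ y‖ₑ ∂(interpMeasure a) := by
  obtain ⟨C, hC, hS⟩ := exists_k1_mul_norm_Skernel_le ha1 ha2
  refine ⟨C, hC, fun t ht φ x hx => ?_⟩
  rw [lintegral_interpMeasure, ← lintegral_const_mul' _ _ ENNReal.ofReal_ne_top]
  refine (mul_le_mul' le_rfl (enorm_integral_le_lintegral_enorm _)).trans ?_
  rw [← lintegral_const_mul' _ _ ENNReal.ofReal_ne_top]
  refine setLIntegral_mono' measurableSet_Ioi fun y hy => ?_
  have hy0 : 0 < y := hy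
  have hk := k1_pos (a := a) hx
  have hky := k1_pos (a := a) hy0
  rw [← ofReal_norm, ← ofReal_norm, ← ENNReal.ofReal_mul hk.le, ← ENNReal.ofReal_mul hky.le,
    ← ENNReal.ofReal_mul (by positivity), ← ENNReal.ofReal_mul (by positivity)]
  refine ENNReal.ofReal_le_ofReal ?_
  rw [norm_mul, norm_mul, Complex.norm_real, Real.norm_eq_abs,
    abs_of_pos (Real.rpow_pos_of_pos hy0 a)]
  have e : k1 a y ^ (-2 : ℝ) * k1 a y = (k1 a y)⁻¹ := by
    rw [← Real.rpow_add_one hky.ne', ← Real.rpow_neg_one]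
    norm_num
  calc k1 a x * (‖Skernel a x y t‖ * ‖φ y‖ * y ^ a)
      = (k1 a x * ‖Skernel a x y t‖) * (‖φ y‖ * y ^ a) := by ring
    _ ≤ C * (|t| ^ (-(a + 1) / 2) + |t| ^ (-(1 / 2) : ℝ)) * (k1 a y)⁻¹ * (‖φ y‖ * y ^ a) := by
        exact mul_le_mul_of_nonneg_right (hS t ht x hx y hy) (by positivity)
    _ = _ := by
        rw [← e]
        ring

lemma lintegral_interpMeasure_sq (a : ℝ) (F : ℝ → ℂ) :
    ∫⁻ x, (ENNReal.ofReal (k1 a x) * ‖F x‖ₑ) ^ 2 ∂(interpMeasure a) =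
      ∫⁻ x in Ioi 0, ENNReal.ofReal (x ^ a) * ‖F x‖ₑ ^ 2 := by
  rw [lintegral_interpMeasure]
  refine setLIntegral_congr_fun measurableSet_Ioi fun x hx => ?_
  have hx0 : 0 < x := hx
  have hk := k1_pos (a := a) hx0
  rw [mul_pow, ← mul_assoc, ← ENNReal.ofReal_pow hk.le, ← ENNReal.ofReal_mul (by positivity)]
  congr 2
  rw [Real.rpow_neg hk.le, ← Real.rpow_natCast (k1 a x) 2]
  push_cast
  have : k1 a x ^ (2 : ℝ) ≠ 0 := by positivity
  field_simp

lemma exists_Sop_L2_bound {a : ℝ} (ha1 : -1 < a) (ha2 : a < 0) :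
    ∃ B : ENNReal, B ≠ ⊤ ∧ ∀ t ≠ 0, ∀ φ : ℝ → ℂ, SopDomain a φ →
      ∫⁻ x, (ENNReal.ofReal (k1 a x) * ‖Sop a t φ x‖ₑ) ^ 2 ∂(interpMeasure a) ≤
        B * ∫⁻ y, (ENNReal.ofReal (k1 a y) * ‖φ y‖ₑ) ^ 2 ∂(interpMeasure a) := by
  obtain ⟨B, hB, hH⟩ := exists_hankel_L2_bound ha1 ha2
  refine ⟨B, hB, fun t ht φ hφ => ?_⟩
  obtain ⟨c, m, -, hmc, hc, hm, hS⟩ := Sop_eq_mul_integral a ht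
  have ht' : 0 < |t| := abs_pos.2 ht
  set τ := 2 * |t| with hτ
  have hτ0 : 0 < τ := by positivity
  set f : ℝ → ℂ := fun y => ((y ^ (a / 2) : ℝ) : ℂ) * (m y * φ y) with hf
  have hfi : IntegrableOn f (Ioi 0) := by
    have h2 : Measurable fun y : ℝ => ((y ^ (a / 2) : ℝ) : ℂ) := by fun_prop
    refine (Integrable.norm hφ).mono' (h2.aestronglyMeasurable.mul
      (hmc.aestronglyMeasurable.mul hφ.aestronglyMeasurable)) ?_
    filter_upwards [ae_restrict_mem measurableSet_Ioi] with y hy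
    have hy0 : 0 < y := hy
    have hky := k1_pos (a := a) hy0
    simp only [hf]
    rw [norm_mul, norm_mul, norm_mul, hm, one_mul, Complex.norm_real, Complex.norm_real,
      Real.norm_eq_abs, Real.norm_eq_abs, abs_of_pos (by positivity), abs_of_pos (by positivity)]
    gcongr
    rw [← div_eq_inv_mul, le_div_iff₀ hky]
    calc y ^ (a / 2) * k1 a y ≤ y ^ (a / 2) * y ^ (a / 2) := by
          gcongr
          exact min_le_right _ _
      _ = y ^ a := by rw [← Real.rpow_add hy0, add_halves]
  rw [lintegral_interpMeasure_sq, lintegral_interpMeasure_sq]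
  have hscale : ∀ x ∈ Ioi (0 : ℝ), ENNReal.ofReal ((τ * x) ^ a) * ‖Sop a t φ (τ * x)‖ₑ ^ 2 =
      ENNReal.ofReal τ⁻¹ * ‖∫ y in Ioi 0,
        (((x * y) ^ (a / 2) * besselEntire ((a - 1) / 2) (x * y) : ℝ) : ℂ) * f y‖ₑ ^ 2 := by
    intro x hx
    have hx0 : 0 < x := hx
    have e1 : ∫ y in Ioi 0,
        (((x * y) ^ (a / 2) * besselEntire ((a - 1) / 2) (x * y) : ℝ) : ℂ) * f y =
        ((x ^ (a / 2) : ℝ) : ℂ) * ∫ y in Ioi 0,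
          (besselEntire ((a - 1) / 2) (τ * x * y / τ) : ℂ) * (m y * φ y * ((y ^ a : ℝ) : ℂ)) := by
      rw [← integral_const_mul]
      refine setIntegral_congr_fun measurableSet_Ioi fun y hy => ?_
      have hy0 : 0 < y := hy
      have : y ^ a = y ^ (a / 2) * y ^ (a / 2) := by rw [← Real.rpow_add hy0, add_halves]
      simp only [hf]
      rw [this, Real.mul_rpow hx0.le hy0.le, show τ * x * y / τ = x * y by field_simp]
      push_cast
      ring
    rw [e1, hS φ (τ * x) (by positivity), ← ofReal_norm, ← ofReal_norm,
      ← ENNReal.ofReal_pow (by positivity), ← ENNReal.ofReal_pow (by positivity),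
      ← ENNReal.ofReal_mul (by positivity), ← ENNReal.ofReal_mul (by positivity)]
    congr 1
    rw [norm_mul, norm_mul, norm_mul, hc, one_mul, Complex.norm_real, Complex.norm_real,
      Real.norm_eq_abs, Real.norm_eq_abs, abs_of_pos (by positivity), abs_of_pos (by positivity),
      mul_pow, mul_pow, ← mul_assoc, ← mul_assoc]
    congr 1
    rw [Real.mul_rpow hτ0.le hx0.le, ← Real.rpow_natCast (τ ^ _), ← Real.rpow_natCast (x ^ _),
      ← Real.rpow_mul hτ0.le, ← Real.rpow_mul hx0.le, mul_right_comm, ← Real.rpow_add hτ0,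
      ← Real.rpow_neg_one]
    push_cast
    ring_nf
  have hmain := hH f hfi
  have hinv := lintegral_Ioi_comp_mul_left
    (fun x => ENNReal.ofReal (x ^ a) * ‖Sop a t φ x‖ₑ ^ 2) hτ0
  rw [setLIntegral_congr_fun measurableSet_Ioi hscale,
    lintegral_const_mul' _ _ ENNReal.ofReal_ne_top] at hinv
  have hτi : ENNReal.ofReal τ⁻¹ ≠ 0 := by simpa using hτ0
  rw [← (ENNReal.mul_right_inj hτi ENNReal.ofReal_ne_top).1 hinv]
  refine hmain.trans_eq ?_
  congr 1
  refine setLIntegral_congr_fun measurableSet_Ioi fun y hy => ?_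
  have hy0 : 0 < y := hy
  simp only [hf]
  rw [← ofReal_norm, ← ofReal_norm, norm_mul, norm_mul, hm, one_mul, Complex.norm_real,
    Real.norm_eq_abs, abs_of_pos (by positivity), ENNReal.ofReal_mul (by positivity), mul_pow,
    ← ENNReal.ofReal_pow (by positivity), ← Real.rpow_natCast, ← Real.rpow_mul hy0.le]
  push_cast
  ring_nf

/-! ### The interpolated estimate -/

lemma k1_nonneg {a : ℝ} (ha1 : -1 < a) (ha2 : a < 0) (x : ℝ) : 0 ≤ k1 a x := by
  refine le_min zero_le_one ?_
  rcases le_or_gt 0 x with hx | hx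
  · exact Real.rpow_nonneg hx _
  · rw [Real.rpow_def_of_neg hx]
    have := Real.pi_pos
    exact mul_nonneg (Real.exp_pos _).le (Real.cos_nonneg_of_mem_Icc ⟨by nlinarith, by nlinarith⟩)

lemma SPlus.integrableOn {a : ℝ} (ha1 : -1 < a) (ha2 : a < 0) {φ : ℝ → ℂ} (hφ : SPlus φ)
    {q : ℝ} (hq : 1 ≤ q) :
    IntegrableOn (fun y => ‖φ y‖ ^ q * (k1 a y ^ (q - 2) * y ^ a)) (Ioi 0) := by
  have hcont : ContinuousOn φ (Ioi 0) := hφ.1.continuousOn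
  obtain ⟨C₀, hC₀⟩ := hφ.2 0 0
  obtain ⟨C₂, hC₂⟩ := hφ.2 2 0
  have hk := measurable_k1 a
  have hw : Measurable fun y => k1 a y ^ (q - 2) * y ^ a := by fun_prop
  have hmeas : AEStronglyMeasurable (fun y => ‖φ y‖ ^ q * (k1 a y ^ (q - 2) * y ^ a))
      (volume.restrict (Ioi 0)) :=
    AEStronglyMeasurable.mul ((hcont.aestronglyMeasurable
      measurableSet_Ioi).norm.aemeasurable.pow_const q).aestronglyMeasurable
      hw.aestronglyMeasurable
  have hD₀ : 0 ≤ C₀ := (norm_nonneg _).trans (hC₀ 1 one_pos)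
  have hD₂ : 0 ≤ C₂ := (norm_nonneg _).trans (hC₂ 1 one_pos)
  rw [← Ioc_union_Ioi_eq_Ioi zero_le_one, integrableOn_union]
  constructor
  · have hi : IntegrableOn (fun y : ℝ => C₀ ^ q * y ^ a) (Ioc 0 1) :=
      ((intervalIntegrable_iff_integrableOn_Ioc_of_le zero_le_one).1
        (intervalIntegral.intervalIntegrable_rpow' ha1)).const_mul _
    refine Integrable.mono' hi (hmeas.mono_set Ioc_subset_Ioi_self) ?_
    filter_upwards [ae_restrict_mem measurableSet_Ioc] with y hy
    have hy0 : 0 < y := hy.1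
    have hk1 : k1 a y = 1 :=
      min_eq_left (Real.one_le_rpow_of_pos_of_le_one_of_nonpos hy0 hy.2 (by linarith))
    have hb : ‖φ y‖ ≤ C₀ := by simpa [DIter] using hC₀ y hy0
    rw [hk1, Real.one_rpow, one_mul, Real.norm_of_nonneg (by positivity)]
    gcongr
  · have hi : IntegrableOn (fun y : ℝ => C₂ ^ q * y ^ (-2 : ℝ)) (Ioi 1) :=
      (integrableOn_Ioi_rpow_of_lt (by norm_num) one_pos).const_mul _
    refine Integrable.mono' hi (hmeas.mono_set (Ioi_subset_Ioi zero_le_one)) ?_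
    filter_upwards [ae_restrict_mem measurableSet_Ioi] with y hy
    have hy1 : 1 < y := hy
    have hy0 : 0 < y := one_pos.trans hy1
    have hk1 : k1 a y = y ^ (a / 2) :=
      min_eq_right (Real.rpow_le_one_of_one_le_of_nonpos hy1.le (by linarith))
    have hb : ‖φ y‖ ≤ C₂ * y ^ (-2 : ℝ) := by
      have h := hC₂ y hy0
      rw [DIter, norm_mul, norm_pow, Complex.norm_real, Real.norm_of_nonneg hy0.le] at h
      rw [Real.rpow_neg hy0.le, ← div_eq_mul_inv, le_div_iff₀ (by positivity), mul_comm]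
      simpa using h
    have hkk := k1_pos (a := a) hy0
    rw [Real.norm_of_nonneg (by positivity), hk1, ← Real.rpow_mul hy0.le, ← Real.rpow_add hy0]
    calc ‖φ y‖ ^ q * y ^ (a / 2 * (q - 2) + a)
        ≤ (C₂ * y ^ (-2 : ℝ)) ^ q * 1 := by
          gcongr
          exact Real.rpow_le_one_of_one_le_of_nonpos hy1.le (by nlinarith)
      _ = C₂ ^ q * y ^ (-2 * q) := by
          rw [mul_one, Real.mul_rpow hD₂ (by positivity), ← Real.rpow_mul hy0.le]
      _ ≤ C₂ ^ q * y ^ (-2 : ℝ) := by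
          gcongr
          · exact hy1.le
          · linarith

lemma SPlus.sopDomain {a : ℝ} (ha1 : -1 < a) (ha2 : a < 0) {φ : ℝ → ℂ} (hφ : SPlus φ) :
    SopDomain a φ := by
  have hk := measurable_k1 a
  have hw : Measurable fun y => (((k1 a y)⁻¹ * y ^ a : ℝ) : ℂ) := by fun_prop
  have hm : AEStronglyMeasurable φ (volume.restrict (Ioi 0)) :=
    hφ.1.continuousOn.aestronglyMeasurable measurableSet_Ioi
  refine Integrable.mono' (hφ.integrableOn ha1 ha2 le_rfl) (hw.aestronglyMeasurable.mul hm) ?_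
  filter_upwards [ae_restrict_mem measurableSet_Ioi] with y hy
  have hy0 : 0 < y := hy
  have hky := k1_pos (a := a) hy0
  rw [norm_mul, Complex.norm_real, Real.norm_of_nonneg (by positivity), Real.rpow_one,
    show (1 : ℝ) - 2 = -1 by norm_num, Real.rpow_neg_one, mul_comm]

lemma norm_mul_k1_rpow (a : ℝ) {q : ℝ} (hq : q ≠ 0) (w : ℂ) {x : ℝ} (hx : 0 < x) :
    ‖w * ((k1 a x ^ (1 - 2 / q) : ℝ) : ℂ)‖ ^ q * x ^ a =
      k1 a x ^ (-2 : ℝ) * x ^ a * (k1 a x * ‖w‖) ^ q := by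
  have hk := k1_pos (a := a) hx
  rw [norm_mul, Complex.norm_real, Real.norm_of_nonneg (by positivity),
    Real.mul_rpow (norm_nonneg _) (by positivity), Real.mul_rpow hk.le (norm_nonneg _),
    ← Real.rpow_mul hk.le, show (1 - 2 / q) * q = -2 + q by field_simp; ring, Real.rpow_add hk]
  ring

lemma LrA_mul_k1_rpow (a : ℝ) {q : ℝ} (hq : q ≠ 0) {F : ℝ → ℂ}
    (hF : AEStronglyMeasurable F (volume.restrict (Ioi 0))) :
    LrA a q (fun x => F x * ((k1 a x ^ (1 - 2 / q) : ℝ) : ℂ)) =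
      (∫⁻ x, ENNReal.ofReal ((k1 a x * ‖F x‖) ^ q) ∂(interpMeasure a)).toReal ^ (1 / q) := by
  have hk := measurable_k1 a
  have hw : Measurable fun x => k1 a x ^ (-2 : ℝ) * x ^ a := by fun_prop
  rw [LrA, setIntegral_congr_fun measurableSet_Ioi
    (fun x hx => norm_mul_k1_rpow a hq (F x) hx), integral_eq_lintegral_of_nonneg_ae,
    lintegral_interpMeasure]
  · congr 2
    refine setLIntegral_congr_fun measurableSet_Ioi fun x hx => ?_
    have hx0 : 0 < x := hx
    have hk := k1_pos (a := a) hx0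
    rw [ENNReal.ofReal_mul (by positivity)]
  · filter_upwards [ae_restrict_mem measurableSet_Ioi] with x hx
    have hx0 : 0 < x := hx
    have hk := k1_pos (a := a) hx0
    simp only [Pi.zero_apply]
    positivity
  · exact hw.aestronglyMeasurable.mul
      ((hk.aemeasurable.mul hF.norm.aemeasurable).pow_const q).aestronglyMeasurable

lemma SPlus.lintegral_interpMeasure_lt_top {a : ℝ} (ha1 : -1 < a) (ha2 : a < 0) {φ : ℝ → ℂ}
    (hφ : SPlus φ) {q : ℝ} (hq : 1 ≤ q) :
    ∫⁻ x, ENNReal.ofReal ((k1 a x * ‖φ x‖) ^ q) ∂(interpMeasure a) < ⊤ := by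
  rw [lintegral_interpMeasure]
  refine lt_of_eq_of_lt (setLIntegral_congr_fun measurableSet_Ioi fun x hx => ?_)
    (hφ.integrableOn ha1 ha2 hq).2
  have hx0 : 0 < x := hx
  have hk := k1_pos (a := a) hx0
  rw [← ENNReal.ofReal_mul (by positivity), Real.enorm_of_nonneg (by positivity)]
  congr 1
  beta_reduce
  rw [Real.mul_rpow hk.le (norm_nonneg _), show q - 2 = -2 + q by ring, Real.rpow_add hk]
  ring

lemma Sop_add_indicator_compl {a : ℝ} (ha1 : -1 < a) (ha2 : a < 0) {φ : ℝ → ℂ}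
    (h : SopDomain a φ) {E : Set ℝ} (hE : MeasurableSet E) {t x : ℝ} (ht : t ≠ 0) (hx : 0 < x) :
    Sop a t φ x = Sop a t (E.indicator φ) x + Sop a t (Eᶜ.indicator φ) x := by
  rw [Sop, Sop, Sop, ← integral_add ((h.indicator hE).integrableOn_Skernel ha1 ha2 ht hx)
    ((h.indicator hE.compl).integrableOn_Skernel ha1 ha2 ht hx)]
  congr 1 with y
  rw [← add_mul, ← mul_add, ← Pi.add_apply, Set.indicator_self_add_compl]

lemma ofReal_mul_norm_rpow_two {c : ℝ} (hc : 0 ≤ c) (w : ℂ) :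
    ENNReal.ofReal ((c * ‖w‖) ^ (2 : ℝ)) = (ENNReal.ofReal c * ‖w‖ₑ) ^ 2 := by
  rw [← ofReal_norm, ← ENNReal.ofReal_mul hc, ← ENNReal.ofReal_pow (by positivity),
    Real.rpow_two]

lemma exists_Sop_Lr_bound {a r : ℝ} (ha1 : -1 < a) (ha2 : a < 0) (hr : 2 ≤ r) :
    ∃ D ≥ 0, ∀ t ≠ 0, ∀ φ : ℝ → ℂ, Measurable φ → SopDomain a φ → ∀ M > 0,
      ∫⁻ x, ENNReal.ofReal ((k1 a x * ‖φ x‖) ^ (r / (r - 1))) ∂(interpMeasure a) ≤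
        ENNReal.ofReal M →
      ∫⁻ x, ENNReal.ofReal ((k1 a x * ‖Sop a t φ x‖) ^ r) ∂(interpMeasure a) ≤
        ENNReal.ofReal
          (D * ((|t| ^ (-(a + 1) / 2) + |t| ^ (-(1 / 2) : ℝ)) * M) ^ (r - 2) * M) := by
  obtain ⟨B, hB, hL2⟩ := exists_Sop_L2_bound ha1 ha2
  obtain ⟨C, hC, hL1⟩ := exists_dispersive_bound ha1 ha2
  have hk0 := k1_nonneg ha1 ha2
  have hk := measurable_k1 a
  rcases hr.eq_or_lt with rfl | hr
  · refine ⟨B.toReal, ENNReal.toReal_nonneg, fun t ht φ hφ hd M hM hN => ?_⟩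
    rw [show (2 : ℝ) / (2 - 1) = 2 by norm_num] at hN
    simp only [ofReal_mul_norm_rpow_two (hk0 _)] at hN ⊢
    rw [sub_self, Real.rpow_zero, mul_one, ENNReal.ofReal_mul ENNReal.toReal_nonneg,
      ENNReal.ofReal_toReal hB]
    exact (hL2 t ht φ hd).trans (mul_le_mul' le_rfl hN)
  · have hr2 : 0 < r - 2 := by linarith
    have hr0 : 0 < r := by linarith
    refine ⟨B.toReal * (4 * r / (r - 2)) * (2 * C) ^ (r - 2), by positivity,
      fun t ht φ hφ hd M hM hN => ?_⟩
    have ht' : 0 < |t| := abs_pos.2 ht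
    set T := |t| ^ (-(a + 1) / 2) + |t| ^ (-(1 / 2) : ℝ) with hT
    have hT0 : 0 < T := by positivity
    have hac : interpMeasure a ≪ volume.restrict (Ioi 0) := withDensity_absolutelyContinuous _ _
    have hSm : ∀ {ψ : ℝ → ℂ}, SopDomain a ψ → AEStronglyMeasurable (Sop a t ψ) (interpMeasure a) :=
      fun h => (h.aestronglyMeasurable_Sop ha1 ht).mono_ac hac
    set g : ℝ → ℝ := fun x => k1 a x * ‖φ x‖ with hg
    have hgm : Measurable g := hk.mul hφ.norm
    have hg0 : ∀ x, 0 ≤ g x := fun x => mul_nonneg (hk0 x) (norm_nonneg _)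
    have key := lintegral_rpow_le_of_interpolation (μ := interpMeasure a) (g := g)
      (h := fun x => k1 a x * ‖Sop a t φ x‖) hgm hg0
      (hk.aemeasurable.mul (hSm hd).norm.aemeasurable)
      (fun x => mul_nonneg (hk0 x) (norm_nonneg _)) hr (mul_pos hC hT0) hM (B := B) hN ?_
    · refine key.trans_eq ?_
      rw [← ENNReal.ofReal_toReal hB, ← ENNReal.ofReal_mul ENNReal.toReal_nonneg]
      congr 1
      rw [ENNReal.toReal_ofReal ENNReal.toReal_nonneg,
        show 2 * (C * T) * M = 2 * C * (T * M) by ring, Real.mul_rpow (by positivity) (by positivity)]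
      ring
    intro s hs
    have hE : MeasurableSet {x | s < g x} := measurableSet_lt measurable_const hgm
    set E := {x | s < g x} with hEdef
    have hEc : {x | g x ≤ s} = Eᶜ := by ext x; simp [hEdef]
    refine ⟨fun x => ENNReal.ofReal (k1 a x) * ‖Sop a t (E.indicator φ) x‖ₑ,
      fun x => ENNReal.ofReal (k1 a x) * ‖Sop a t (Eᶜ.indicator φ) x‖ₑ, ?_, ?_, ?_, ?_⟩
    · exact hk.ennreal_ofReal.aemeasurable.mul (hSm (hd.indicator hE.compl)).enorm
    · filter_upwards [ae_interpMeasure_pos a] with x hx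
      rw [ENNReal.ofReal_mul (hk0 x), ofReal_norm, ← mul_add,
        Sop_add_indicator_compl ha1 ha2 hd hE ht hx]
      exact mul_le_mul' le_rfl (enorm_add_le _ _)
    · filter_upwards [ae_interpMeasure_pos a] with x hx
      refine (hL1 t ht (E.indicator φ) x hx).trans_eq ?_
      rw [← lintegral_indicator hE]
      congr 2 with y
      by_cases hy : y ∈ E
      · simp [hy, hg, ENNReal.ofReal_mul (hk0 y)]
      · simp [hy]
    · refine (hL2 t ht _ (hd.indicator hE.compl)).trans_eq ?_
      rw [hEc, ← lintegral_indicator hE.compl]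
      congr 2 with y
      by_cases hy : y ∈ Eᶜ
      · rw [Set.indicator_of_mem hy, Set.indicator_of_mem hy, ← ofReal_mul_norm_rpow_two (hk0 y),
          Real.rpow_two]
      · rw [Set.indicator_of_notMem hy, Set.indicator_of_notMem hy]
        simp

lemma rpow_time_factor_le {a r s : ℝ} (hr : 2 ≤ r) (hs : 0 < s) :
    (s ^ (-(a + 1) / 2) + s ^ (-(1 / 2) : ℝ)) ^ ((r - 2) * (1 / r)) ≤
      s ^ (-(a + 1) * (1 / 2 - 1 / r)) + s ^ (-(1 / 2 - 1 / r)) := by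
  have hr0 : 0 < r := by linarith
  have hθ : (r - 2) * (1 / r) = 1 - 2 / r := by field_simp
  have hθ0 : 0 ≤ (r - 2) * (1 / r) := mul_nonneg (by linarith) (by positivity)
  have hθ1 : (r - 2) * (1 / r) ≤ 1 := by
    have : 0 < 2 / r := by positivity
    linarith
  refine (Real.rpow_add_le_add_rpow (by positivity) (by positivity) hθ0 hθ1).trans_eq ?_
  rw [← Real.rpow_mul hs.le, ← Real.rpow_mul hs.le, hθ]
  congr 2 <;> ring

/-- Weighted interpolated dispersive estimate for `-1 < a < 0` and `r ≥ 2`. -/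
theorem weighted_dispersive_Lr_estimate (a r : ℝ) (ha1 : -1 < a) (ha2 : a < 0) (hr : 2 ≤ r) :
    ∃ C > (0:ℝ), ∀ t : ℝ, t ≠ 0 → ∀ φ : ℝ → ℂ, SPlus φ →
      LrA a r (fun x => Sop a t φ x * ((k1 a x ^ (1 - 2 / r) : ℝ) : ℂ)) ≤
        C * (|t| ^ (-(a + 1) * (1 / 2 - 1 / r)) + |t| ^ (-(1 / 2 - 1 / r))) *
          LrA a (r / (r - 1)) (fun x => φ x * ((k1 a x ^ (1 - 2 / (r / (r - 1))) : ℝ) : ℂ)) := by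
  obtain ⟨D, hD, hLr⟩ := exists_Sop_Lr_bound ha1 ha2 hr
  have hr0 : 0 < r := by linarith
  have hr1 : 0 < r - 1 := by linarith
  have hp : 1 ≤ r / (r - 1) := by
    rw [le_div_iff₀ hr1]
    linarith
  refine ⟨D ^ (1 / r) + 1, by positivity, fun t ht φ hφ => ?_⟩
  have ht' : 0 < |t| := abs_pos.2 ht
  have hd := hφ.sopDomain ha1 ha2
  rw [LrA_mul_k1_rpow a hr0.ne' (hd.aestronglyMeasurable_Sop ha1 ht),
    LrA_mul_k1_rpow a (by positivity) hd.aestronglyMeasurable]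
  have hfin := hφ.lintegral_interpMeasure_lt_top ha1 ha2 hp
  set N := (∫⁻ x, ENNReal.ofReal ((k1 a x * ‖φ x‖) ^ (r / (r - 1))) ∂(interpMeasure a)).toReal
    with hN
  set I := (∫⁻ x, ENNReal.ofReal ((k1 a x * ‖Sop a t φ x‖) ^ r) ∂(interpMeasure a)).toReal with hI
  set T := |t| ^ (-(a + 1) / 2) + |t| ^ (-(1 / 2) : ℝ) with hT
  have hT0 : 0 < T := by positivity
  have hN0 : 0 ≤ N := ENNReal.toReal_nonneg
  set ψ : ℝ → ℂ := (Ioi 0).indicator φ with hψ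
  have hψm : Measurable ψ := by
    rw [hψ, ← piecewise_eq_indicator]
    exact hφ.1.continuousOn.measurable_piecewise continuousOn_const measurableSet_Ioi
  have hSop : Sop a t ψ = Sop a t φ := by
    funext x
    refine setIntegral_congr_fun measurableSet_Ioi fun y hy => ?_
    rw [hψ, Set.indicator_of_mem hy]
  have hbound : ∀ M > N, I ≤ D * (T * M) ^ (r - 2) * M := by
    intro M hM
    have hM0 : 0 < M := hN0.trans_lt hM
    refine ENNReal.toReal_le_of_le_ofReal (by positivity) ?_
    rw [← hSop]
    refine hLr t ht ψ hψm (hd.indicator measurableSet_Ioi) M hM0 ?_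
    rw [lintegral_congr_ae (g := fun x => ENNReal.ofReal ((k1 a x * ‖φ x‖) ^ (r / (r - 1))))]
    · exact (ENNReal.le_ofReal_iff_toReal_le hfin.ne hM0.le).2 hM.le
    · filter_upwards [ae_interpMeasure_pos a] with x hx
      rw [hψ, Set.indicator_of_mem (mem_Ioi.2 hx)]
  have hIN : I ≤ D * (T * N) ^ (r - 2) * N := by
    have hcont : Continuous fun M : ℝ => D * (T * M) ^ (r - 2) * M := by
      have : Continuous fun M : ℝ => (T * M) ^ (r - 2) :=
        (Real.continuous_rpow_const (by linarith)).comp (continuous_const.mul continuous_id)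
      fun_prop
    exact ge_of_tendsto ((hcont.tendsto N).mono_left nhdsWithin_le_nhds)
      (eventually_nhdsWithin_of_forall (s := Ioi N) hbound)
  calc I ^ (1 / r) ≤ (D * (T * N) ^ (r - 2) * N) ^ (1 / r) := by
        gcongr
    _ = D ^ (1 / r) * T ^ ((r - 2) * (1 / r)) * N ^ (1 / (r / (r - 1))) := by
        rw [Real.mul_rpow hT0.le hN0,
          show D * (T ^ (r - 2) * N ^ (r - 2)) * N = D * T ^ (r - 2) * (N ^ (r - 2) * N) by ring,
          ← Real.rpow_add_one' hN0 (by linarith), Real.mul_rpow (by positivity) (by positivity),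
          Real.mul_rpow hD (by positivity), ← Real.rpow_mul hT0.le, ← Real.rpow_mul hN0]
        congr 2
        field_simp
        ring
    _ ≤ (D ^ (1 / r) + 1) * (|t| ^ (-(a + 1) * (1 / 2 - 1 / r)) + |t| ^ (-(1 / 2 - 1 / r))) *
          N ^ (1 / (r / (r - 1))) := by
        have h := rpow_time_factor_le (a := a) hr ht'
        gcongr
        linarith
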